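/- arXiv:1808.05550 — 4 statements merged into one kernel-verified Lean document; each statement's English description precedes it below -/
import Mathlib

section
/- (Alexandrov–Fenchel inequality for mixed discriminants, Hermitian case.) Let n ≥ 2. For any n×n Hermitian matrix B and any n×n Hermitian positive definite matrices A, A^(3), …, A^(n), one has D(A, B, A^(3), …, A^(n))² ≥ D(A, A, A^(3), …, A^(n)) · D(B, B, A^(3), …, A^(n)). -/
open Matrix MeasureTheory Finset ProbabilityTheory
open scoped Classical ComplexOrder

noncomputable section

/-- The mixed discriminant of `n` matrices `A 0, …, A (n-1)`:
`D(A₁,…,Aₙ) = (1/n!) Σ_{σ ∈ Sₙ} det M^σ`, where the `j`-th column of `M^σ`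
is the `j`-th column of `A (σ j)`. -/
def mixedDisc {n : ℕ} (A : Fin n → Matrix (Fin n) (Fin n) ℂ) : ℂ :=
  (n.factorial : ℂ)⁻¹ * ∑ σ : Equiv.Perm (Fin n), (Matrix.of fun i j => A (σ j) i j).det

/-- The real value of the mixed discriminant (real for Hermitian arguments). -/
def mixedDiscR {n : ℕ} (A : Fin n → Matrix (Fin n) (Fin n) ℂ) : ℝ := (mixedDisc A).re

end

noncomputable section

namespace AFproof

/-- unnormalised mixed discriminant -/
def S {n : ℕ} (A : Fin n → Matrix (Fin n) (Fin n) ℂ) : ℂ :=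
  ∑ σ : Equiv.Perm (Fin n), (Matrix.of fun i j => A (σ j) i j).det

lemma S_apply {n : ℕ} (A : Fin n → Matrix (Fin n) (Fin n) ℂ) :
    S A = ∑ σ : Equiv.Perm (Fin n), ∑ τ : Equiv.Perm (Fin n),
      ((Equiv.Perm.sign τ : ℤ) : ℂ) * ∏ j, A (σ j) (τ j) j := by
  simp [S, Matrix.det_apply']

lemma S_perm {n : ℕ} (A : Fin n → Matrix (Fin n) (Fin n) ℂ) (π : Equiv.Perm (Fin n)) :
    S (fun i => A (π i)) = S A := by
  unfold S
  exact Fintype.sum_equiv (Equiv.mulLeft π) _ _ (fun σ => by simp)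

lemma S_smul {n : ℕ} (A : Fin n → Matrix (Fin n) (Fin n) ℂ) (c : Fin n → ℂ) :
    S (fun i => c i • A i) = (∏ i, c i) * S A := by
  rw [S_apply, S_apply, Finset.mul_sum]
  refine Finset.sum_congr rfl fun σ _ => ?_
  rw [Finset.mul_sum]
  refine Finset.sum_congr rfl fun τ _ => ?_
  simp only [Matrix.smul_apply, smul_eq_mul, Finset.prod_mul_distrib]
  rw [Equiv.prod_comp σ c]
  ring

lemma update_eq {n : ℕ} (A : Fin n → Matrix (Fin n) (Fin n) ℂ) (l : Fin n)
    (X : Matrix (Fin n) (Fin n) ℂ) (σ : Equiv.Perm (Fin n)) :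
    (Matrix.of fun i j => Function.update A l X (σ j) i j) =
    (Matrix.of fun i j => A (σ j) i j).updateCol (σ.symm l) (fun i => X i (σ.symm l)) := by
  ext i j
  by_cases h : j = σ.symm l
  · subst h; simp
  · have h' : σ j ≠ l := fun h2 => h (by simp [← h2])
    simp [h, h']

lemma S_add {n : ℕ} (A : Fin n → Matrix (Fin n) (Fin n) ℂ) (l : Fin n)
    (X Y : Matrix (Fin n) (Fin n) ℂ) :
    S (Function.update A l (X + Y)) = S (Function.update A l X) + S (Function.update A l Y) := by
  unfold S
  simp only [update_eq]
  rw [← Finset.sum_add_distrib]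
  refine Finset.sum_congr rfl fun σ _ => ?_
  rw [← Matrix.det_updateCol_add]
  rfl

lemma S_smul1 {n : ℕ} (A : Fin n → Matrix (Fin n) (Fin n) ℂ) (l : Fin n) (c : ℂ)
    (X : Matrix (Fin n) (Fin n) ℂ) :
    S (Function.update A l (c • X)) = c * S (Function.update A l X) := by
  unfold S
  simp only [update_eq]
  rw [Finset.mul_sum]
  refine Finset.sum_congr rfl fun σ _ => ?_
  rw [← Matrix.det_updateCol_smul]
  rfl

lemma S_zero {n : ℕ} (A : Fin n → Matrix (Fin n) (Fin n) ℂ) (l : Fin n) :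
    S (Function.update A l 0) = 0 := by
  have := S_smul1 A l 0 0
  simpa using this

lemma S_real {n : ℕ} (A : Fin n → Matrix (Fin n) (Fin n) ℂ) (hA : ∀ i, (A i).IsHermitian) :
    star (S A) = S A := by
  have key : star (S A) = ∑ σ : Equiv.Perm (Fin n), ∑ τ : Equiv.Perm (Fin n),
      ((Equiv.Perm.sign τ : ℤ) : ℂ) * ∏ j, A (σ j) j (τ j) := by
    rw [S_apply, star_sum]
    refine Finset.sum_congr rfl fun σ _ => ?_
    rw [star_sum]
    refine Finset.sum_congr rfl fun τ _ => ?_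
    rw [star_mul', star_prod]
    congr 1
    · simp
    · exact Finset.prod_congr rfl fun j _ => (hA _).apply _ _
  rw [key, S_apply, Finset.sum_comm]
  conv_rhs => rw [Finset.sum_comm]
  refine Fintype.sum_equiv (Equiv.inv _) _ _ fun τ => ?_
  refine Fintype.sum_equiv (Equiv.mulRight τ⁻¹) _ _ fun σ => ?_
  simp only [Equiv.inv_apply, Equiv.Perm.sign_inv, Equiv.coe_mulRight]
  congr 1
  exact Fintype.prod_equiv τ _ _ fun j => by simp

/-- the polynomial `t ↦ S (U + t V)` -/
def P {n : ℕ} (U V : Fin n → Matrix (Fin n) (Fin n) ℂ) : Polynomial ℂ :=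
  ∑ σ : Equiv.Perm (Fin n), ∑ τ : Equiv.Perm (Fin n),
      Polynomial.C ((Equiv.Perm.sign τ : ℤ) : ℂ) *
        ∏ j, (Polynomial.C (U (σ j) (τ j) j) + Polynomial.X * Polynomial.C (V (σ j) (τ j) j))

lemma P_eval {n : ℕ} (U V : Fin n → Matrix (Fin n) (Fin n) ℂ) (t : ℂ) :
    (P U V).eval t = S (fun i => U i + t • V i) := by
  rw [S_apply, P]
  simp only [Polynomial.eval_finsetSum, Polynomial.eval_prod, Polynomial.eval_mul,
    Polynomial.eval_add, Polynomial.eval_C, Polynomial.eval_X, Matrix.add_apply,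
    Matrix.smul_apply, smul_eq_mul]

lemma P_deriv {n : ℕ} (U V : Fin n → Matrix (Fin n) (Fin n) ℂ) :
    (P U V).derivative.eval 0 = ∑ l, S (Function.update U l (V l)) := by
  simp only [S_apply]
  rw [Finset.sum_comm, P, Polynomial.derivative_sum, Polynomial.eval_finsetSum]
  refine Finset.sum_congr rfl fun σ _ => ?_
  rw [Finset.sum_comm, Polynomial.derivative_sum, Polynomial.eval_finsetSum]
  refine Finset.sum_congr rfl fun τ _ => ?_
  rw [← Finset.mul_sum, Polynomial.derivative_C_mul, Polynomial.eval_mul, Polynomial.eval_C,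
    Polynomial.derivative_prod_finset, Polynomial.eval_finsetSum]
  congr 1
  refine Fintype.sum_equiv σ _ _ fun m => ?_
  rw [← Finset.mul_prod_erase Finset.univ _ (Finset.mem_univ m), Polynomial.eval_mul,
    Polynomial.eval_prod, mul_comm]
  congr 1
  · simp
  · refine Finset.prod_congr rfl fun j hj => ?_
    have : σ j ≠ σ m := fun h => (Finset.ne_of_mem_erase hj) (σ.injective h)
    simp [Function.update_of_ne this]

/-- Upper half space of matrices. -/
def Up {n : ℕ} (Z : Matrix (Fin n) (Fin n) ℂ) : Prop :=
  ∃ X Y : Matrix (Fin n) (Fin n) ℂ, X.IsHermitian ∧ Y.PosDef ∧ Z = X + Complex.I • Y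

lemma Up.det_ne {n : ℕ} {Z : Matrix (Fin n) (Fin n) ℂ} (h : Up Z) : Z.det ≠ 0 := by
  obtain ⟨X, Y, hX, hY, rfl⟩ := h
  intro hdet
  obtain ⟨v, hv, h0⟩ := Matrix.exists_mulVec_eq_zero_iff.2 hdet
  have h1 : star v ⬝ᵥ ((X + Complex.I • Y) *ᵥ v) = 0 := by rw [h0]; simp
  rw [Matrix.add_mulVec, Matrix.smul_mulVec, dotProduct_add, dotProduct_smul] at h1
  have hx : (star v ⬝ᵥ (X *ᵥ v)).im = 0 := hX.im_star_dotProduct_mulVec_self v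
  have hy := hY.dotProduct_mulVec_pos hv
  have := congrArg Complex.im h1
  have hy' := (Complex.lt_def.1 hy).1
  simp [hx] at this
  simp [this] at hy'

lemma Up.add {n : ℕ} {Z C : Matrix (Fin n) (Fin n) ℂ} (h : Up Z) (hC : C.PosDef) (t : ℂ)
    (ht : 0 ≤ t.im) : Up (Z + t • C) := by
  obtain ⟨X, Y, hX, hY, rfl⟩ := h
  refine ⟨X + (t.re : ℂ) • C, Y + (t.im : ℂ) • C, ?_, ?_, ?_⟩
  · refine hX.add ?_
    have := hC.isHermitian
    unfold Matrix.IsHermitian at *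
    rw [Matrix.conjTranspose_smul, this]; simp
  · exact hY.add_posSemidef (hC.posSemidef.smul (by exact_mod_cast ht))
  · conv_lhs => rw [← Complex.re_add_im t]
    module

lemma Up.I {n : ℕ} {C : Matrix (Fin n) (Fin n) ℂ} (hC : C.PosDef) : Up (Complex.I • C) :=
  ⟨0, C, Matrix.isHermitian_zero, hC, by simp⟩

lemma S_ne {n : ℕ} (C : Fin n → Matrix (Fin n) (Fin n) ℂ) (hC : ∀ i, (C i).PosDef) (m : ℕ) :
    ∀ k : ℕ, k + m = n → ∀ Z, Up Z → S (fun i : Fin n => if (i : ℕ) < k then Z else C i) ≠ 0 := by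
  induction m with
  | zero =>
    intro k hk Z hZ
    have : S (fun i : Fin n => if (i : ℕ) < k then Z else C i) = n.factorial * Z.det := by
      have h : ∀ i : Fin n, (i : ℕ) < k := fun i => by have := i.2; omega
      simp only [S, h, if_true]
      simp [Fintype.card_perm]
      left; rfl
    rw [this]
    exact mul_ne_zero (by exact_mod_cast n.factorial_ne_zero) hZ.det_ne
  | succ m ih =>
    intro k hk Z hZ
    have ih := ih (k+1) (by omega)
    let c : Fin n := ⟨k, by omega⟩
    let U : Matrix (Fin n) (Fin n) ℂ → Fin n → Matrix (Fin n) (Fin n) ℂ := fun W i =>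
      if (i : ℕ) < k + 1 then W else C i
    let V : Matrix (Fin n) (Fin n) ℂ → Fin n → Matrix (Fin n) (Fin n) ℂ := fun W i =>
      if (i : ℕ) < k + 1 then W else 0
    have hUV : ∀ (W W' : Matrix (Fin n) (Fin n) ℂ) (t : ℂ), (fun i => U W i + t • V W' i) = U (W + t • W') := by
      intro W W' t
      funext i
      by_cases h : (i : ℕ) < k + 1 <;> simp [-Order.lt_add_one_iff, U, V, h]
    let f := P (U Z) (V (C c))
    have hf : ∀ t, f.eval t = S (U (Z + t • C c)) := fun t => by
      rw [P_eval, hUV]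
    have hroot : ∀ t, f.eval t = 0 → t.im < 0 := by
      intro t ht
      by_contra hlt
      rw [hf] at ht
      exact ih _ (hZ.add (hC c) t (not_lt.1 hlt)) ht
    have hder : f.derivative.eval 0
        = (k + 1 : ℕ) * S (fun i : Fin n => if (i : ℕ) < k then Z else C i) := by
      have hterm : ∀ l : Fin n, S (Function.update (U Z) l (V (C c) l)) =
          if (l : ℕ) < k + 1 then S (fun i : Fin n => if (i : ℕ) < k then Z else C i) else 0 := by
        intro l
        by_cases h : (l : ℕ) < k + 1
        · rw [if_pos h, ← S_perm _ (Equiv.swap l c)]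
          congr 1
          funext i
          have hVl : V (C c) l = C c := by simp [-Order.lt_add_one_iff, V, h]
          rw [hVl]
          by_cases hi : i = c
          · subst hi
            simp [c]
          · by_cases hil : i = l
            · subst hil
              have : (i : ℕ) < k := by
                have : (i : ℕ) ≠ k := fun h => hi (Fin.ext h)
                omega
              rw [Equiv.swap_apply_left, Function.update_of_ne (Ne.symm hi)]
              simp [U, c, this]
            · rw [Equiv.swap_apply_of_ne_of_ne hil hi, Function.update_of_ne hil]
              have : (i : ℕ) ≠ k := fun h => hi (Fin.ext h)
              have h2 : (i : ℕ) < k + 1 ↔ (i : ℕ) < k := by omega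
              simp [-Order.lt_add_one_iff, U, h2]
        · rw [if_neg h]
          have hVl : V (C c) l = 0 := by simp [-Order.lt_add_one_iff, V, h]
          rw [hVl, S_zero]
      rw [P_deriv]
      simp only [hterm]
      rw [← Finset.sum_filter, Finset.sum_const, nsmul_eq_mul]
      congr 2
      have := Fin.card_filter_val_lt (n := n) (m := k + 1)
      rw [this]
      omega
    intro hS
    rw [hS, mul_zero] at hder
    have hne : f.derivative ≠ 0 := by
      intro h0
      have hconst := Polynomial.eq_C_of_derivative_eq_zero h0
      have hfc : ∀ t, f.eval t = f.coeff 0 := fun t => by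
        conv_lhs => rw [hconst]
        simp
      let g := P (U (Complex.I • C c)) (V Z)
      have hg : ∀ s, g.eval s = S (U (Complex.I • C c + s • Z)) := fun s => by
        rw [P_eval, hUV]
      have hg2 : ∀ s, s ≠ 0 → g.eval s = (∏ i : Fin n, if (i : ℕ) < k + 1 then s else 1)
          * f.coeff 0 := by
        intro s hs
        rw [hg, ← hfc (Complex.I / s), hf, ← S_smul]
        congr 1
        funext i
        by_cases h : (i : ℕ) < k + 1
        · simp only [U, h, if_true, smul_add, smul_smul]
          rw [mul_div_cancel₀ _ hs, add_comm]
        · simp [-Order.lt_add_one_iff, U, h]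
      have hc1 : Continuous (fun s : ℂ => g.eval s) := g.continuous
      have hc2 : Continuous (fun s : ℂ => (∏ i : Fin n, if (i : ℕ) < k + 1 then s else 1)
          * f.coeff 0) := by
        refine Continuous.mul (continuous_finsetProd _ fun i _ => ?_) continuous_const
        split_ifs <;> fun_prop
      have := congrFun (Continuous.ext_on (dense_compl_singleton (0:ℂ)) hc1 hc2
        (fun s hs => hg2 s hs)) 0
      simp only [hg] at this
      rw [Finset.prod_eq_zero (Finset.mem_univ c) (by simp [c])] at this
      simp only [zero_smul, add_zero, zero_mul] at this
      exact ih _ (Up.I (hC c)) this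
    have hmem : (0:ℂ) ∈ f.derivative.rootSet ℂ := by
      rw [Polynomial.mem_rootSet]
      exact ⟨hne, by simpa using hder⟩
    have hdeg : 0 < f.degree := by
      by_contra h
      exact hne (by rw [Polynomial.eq_C_of_degree_le_zero (not_lt.1 h)]; simp)
    have h1 := Polynomial.rootSet_derivative_subset_convexHull_rootSet hdeg hmem
    have h2 : convexHull ℝ (f.rootSet ℂ) ⊆ {z : ℂ | z.im < 0} := by
      refine convexHull_min (fun z hz => ?_) (convex_halfSpace_im_lt 0)
      rw [Polynomial.mem_rootSet] at hz
      exact hroot z (by simpa using hz.2)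
    have := h2 h1
    simp at this

lemma quad (a b c : ℝ) (ha : a ≠ 0)
    (h : ∀ z : ℂ, 0 < z.im → (a : ℂ) * z ^ 2 + 2 * b * z + c ≠ 0) : a * c ≤ b ^ 2 := by
  by_contra hlt
  push Not at hlt
  set d := Real.sqrt (a * c - b ^ 2) with hd
  have hdpos : 0 < d := Real.sqrt_pos.2 (by linarith)
  have hd2 : d ^ 2 = a * c - b ^ 2 := Real.sq_sqrt (by linarith)
  have hd2' : (d : ℂ) ^ 2 = a * c - b ^ 2 := by exact_mod_cast hd2
  have ha' : (a : ℂ) ≠ 0 := by exact_mod_cast ha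
  have habs : ((|a| : ℝ) : ℂ) ^ 2 = a ^ 2 := by exact_mod_cast sq_abs a
  have habs0 : ((|a| : ℝ) : ℂ) ≠ 0 := by exact_mod_cast abs_ne_zero.2 ha
  refine h (((-b / a : ℝ) : ℂ) + ((d / |a| : ℝ) : ℂ) * Complex.I) ?_ ?_
  · have : 0 < d / |a| := div_pos hdpos (abs_pos.2 ha)
    rw [Complex.add_im, Complex.ofReal_im, Complex.im_ofReal_mul]
    simpa using this
  · have h3 : ((d / |a| : ℝ) : ℂ) ^ 2 = (a * c - b ^ 2) / a ^ 2 := by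
      push_cast
      rw [div_pow, hd2', habs]
    have : ∀ x y : ℂ, (a : ℂ) * (x + y * Complex.I) ^ 2 + 2 * b * (x + y * Complex.I) + c =
      a * x ^ 2 - a * y ^ 2 + 2 * b * x + c + (2 * a * x + 2 * b) * y * Complex.I := by
      intro x y
      linear_combination a * y ^ 2 * Complex.I_sq
    rw [this, h3]
    push_cast
    field_simp
    ring

end AFproof

end

/-- **Alexandrov–Fenchel inequality for mixed discriminants** (Hermitian case):
for Hermitian `B` and Hermitian positive definite `A, A₃, …, Aₙ`,
`D(A,B,A₃,…,Aₙ)² ≥ D(A,A,A₃,…,Aₙ) · D(B,B,A₃,…,Aₙ)`. -/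
theorem alexandrov_fenchel_mixedDisc {n : ℕ} (hn : 2 ≤ n)
    (A B : Matrix (Fin n) (Fin n) ℂ) (hA : A.PosDef) (hB : B.IsHermitian)
    (C : Fin n → Matrix (Fin n) (Fin n) ℂ) (hC : ∀ i : Fin n, 2 ≤ (i : ℕ) → (C i).PosDef) :
    mixedDiscR (fun i => if (i : ℕ) ≤ 1 then A else C i)
        * mixedDiscR (fun i => if (i : ℕ) ≤ 1 then B else C i)
      ≤ mixedDiscR (fun i => if (i : ℕ) = 0 then A else if (i : ℕ) = 1 then B else C i) ^ 2 := by
  have h0 : (0:ℕ) < n := by omega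
  have h1 : 1 < n := by omega
  let e0 : Fin n := ⟨0, h0⟩
  let e1 : Fin n := ⟨1, h1⟩
  have e01 : e0 ≠ e1 := by simp [e0, e1]
  let M : Matrix (Fin n) (Fin n) ℂ → Matrix (Fin n) (Fin n) ℂ →
      Fin n → Matrix (Fin n) (Fin n) ℂ := fun X Y i =>
    if (i : ℕ) = 0 then X else if (i : ℕ) = 1 then Y else C i
  have hu0 : ∀ X Y W, Function.update (M X Y) e0 W = M W Y := by
    intro X Y W
    funext i
    by_cases h : i = e0
    · subst h; simp [M, e0]
    · have : (i : ℕ) ≠ 0 := fun h' => h (Fin.ext h')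
      simp [M, Function.update_of_ne h, this]
  have hu1 : ∀ X Y W, Function.update (M X Y) e1 W = M X W := by
    intro X Y W
    funext i
    by_cases h : i = e1
    · subst h; simp [M, e1]
    · have : (i : ℕ) ≠ 1 := fun h' => h (Fin.ext h')
      simp [M, Function.update_of_ne h, this]
  have hsymm : ∀ X Y, AFproof.S (M X Y) = AFproof.S (M Y X) := by
    intro X Y
    rw [← AFproof.S_perm _ (Equiv.swap e0 e1)]
    congr 1
    funext i
    by_cases h : i = e0
    · subst h; simp [M, e0, e1]
    · by_cases h' : i = e1
      · subst h'; simp [M, e0, e1]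
      · have a0 : (i : ℕ) ≠ 0 := fun h2 => h (Fin.ext h2)
        have a1 : (i : ℕ) ≠ 1 := fun h2 => h' (Fin.ext h2)
        rw [Equiv.swap_apply_of_ne_of_ne h h']
        simp [M, a0, a1]
  have hadd0 : ∀ X X' Y, AFproof.S (M (X + X') Y) = AFproof.S (M X Y) + AFproof.S (M X' Y) := by
    intro X X' Y
    have := AFproof.S_add (M X Y) e0 X X'
    simpa only [hu0] using this
  have hsm0 : ∀ (c : ℂ) X Y, AFproof.S (M (c • X) Y) = c * AFproof.S (M X Y) := by
    intro c X Y
    have := AFproof.S_smul1 (M X Y) e0 c X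
    simpa only [hu0] using this
  have hexp : ∀ z : ℂ, AFproof.S (M (z • A + B) (z • A + B)) =
      AFproof.S (M A A) * z ^ 2 + 2 * AFproof.S (M A B) * z + AFproof.S (M B B) := by
    intro z
    rw [hadd0, hsm0, hsymm A, hsymm B, hadd0, hadd0, hsm0, hsm0, hsymm B A]
    ring
  have hM : ∀ X, M X X = fun i : Fin n => if (i : ℕ) < 2 then X else
      (if (i : ℕ) < 2 then A else C i) := by
    intro X
    funext i
    by_cases h : (i : ℕ) < 2
    · by_cases h0 : (i : ℕ) = 0
      · simp [M, h0]
      · have : (i : ℕ) = 1 := by omega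
        simp [M, this]
    · have h0 : (i : ℕ) ≠ 0 := by omega
      have h1 : (i : ℕ) ≠ 1 := by omega
      simp [M, h, h0, h1]
  have hne : ∀ Z, AFproof.Up Z → AFproof.S (M Z Z) ≠ 0 := by
    intro Z hZ
    rw [hM]
    refine AFproof.S_ne (fun i : Fin n => if (i : ℕ) < 2 then A else C i) ?_ (n - 2) 2
      (by omega) Z hZ
    intro i
    by_cases h : (i : ℕ) < 2
    · simpa [h] using hA
    · simpa [h] using hC i (by omega)
  have hreal : ∀ X Y, X.IsHermitian → Y.IsHermitian →
      AFproof.S (M X Y) = ((AFproof.S (M X Y)).re : ℂ) := by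
    intro X Y hX hY
    have := AFproof.S_real (M X Y) (by
      intro i
      by_cases h0 : (i : ℕ) = 0
      · simpa [M, h0] using hX
      · by_cases h1 : (i : ℕ) = 1
        · simpa [M, h1] using hY
        · simpa [M, h0, h1] using (hC i (by omega)).isHermitian)
    exact (Complex.conj_eq_iff_re.1 this).symm
  have hAh := hA.isHermitian
  have hAA := hreal A A hAh hAh
  have hAB := hreal A B hAh hB
  have hBB := hreal B B hB hB
  have main := AFproof.quad (AFproof.S (M A A)).re (AFproof.S (M A B)).re (AFproof.S (M B B)).re
    (by
      intro h
      rw [h] at hAA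
      apply hne _ (AFproof.Up.I hA)
      rw [hsm0, hsymm, hsm0, hAA]
      simp)
    (by
      intro z hz
      rw [← hAA, ← hAB, ← hBB, ← hexp]
      apply hne
      refine ⟨B + (z.re : ℂ) • A, (z.im : ℂ) • A, ?_, ?_, ?_⟩
      · refine hB.add ?_
        unfold Matrix.IsHermitian at *
        rw [Matrix.conjTranspose_smul, hAh]; simp
      · exact hA.smul (by exact_mod_cast hz)
      · conv_lhs => rw [← Complex.re_add_im z]
        module)
  have hR : ∀ F : Fin n → Matrix (Fin n) (Fin n) ℂ,
      mixedDiscR F = (n.factorial : ℝ)⁻¹ * (AFproof.S F).re := by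
    intro F
    unfold mixedDiscR mixedDisc
    have : ((n.factorial : ℂ))⁻¹ = (((n.factorial : ℝ)⁻¹ : ℝ) : ℂ) := by push_cast; rfl
    rw [this, Complex.re_ofReal_mul]
    rfl
  have hle : ∀ X, (fun i : Fin n => if (i : ℕ) ≤ 1 then X else C i) = M X X := by
    intro X
    funext i
    by_cases h0 : (i : ℕ) = 0
    · simp [M, h0]
    · by_cases h1 : (i : ℕ) = 1
      · simp [M, h1]
      · have : ¬ (i : ℕ) ≤ 1 := by omega
        simp [M, h0, h1, this]
  rw [hle, hle, hR, hR, hR]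
  change _ ≤ ((n.factorial : ℝ)⁻¹ * (AFproof.S (M A B)).re) ^ 2
  have hsq : 0 ≤ ((n.factorial : ℝ)⁻¹) ^ 2 := sq_nonneg _
  nlinarith [mul_le_mul_of_nonneg_left main hsq]
end

section
/- Let n ≥ 1 and 0 ≤ l ≤ k ≤ n. For any n×n Hermitian positive semi-definite matrices A, B, A^(k+1), …, A^(n), one has D(A,…,A [l copies], B,…,B [k−l copies], A^(k+1),…,A^(n))^k ≥ D(A,…,A [k copies], A^(k+1),…,A^(n))^l · D(B,…,B [k copies], A^(k+1),…,A^(n))^(k−l). -/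
open Matrix MeasureTheory Finset ProbabilityTheory
open scoped Classical ComplexOrder

namespace AFProof

theorem logconcave_step (a : ℕ → ℝ) (k : ℕ) (hpos : ∀ i, i ≤ k → 0 < a i)
    (hlc : ∀ i, i + 2 ≤ k → a i * a (i + 2) ≤ a (i + 1) ^ 2) (l : ℕ) (hl : l + 1 ≤ k) :
    a (l + 1) ^ l * a 0 ≤ a l ^ (l + 1) := by
  induction l with
  | zero => simp
  | succ l ih =>
    have ih := ih (by omega)
    have h0 := hpos 0 (by omega)
    have h1 := hpos l (by omega)
    have h2 := hpos (l + 1) (by omega)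
    have h3 := hpos (l + 2) (by omega)
    have h := hlc l (by omega)
    have hp : a l ^ (l + 1) * a (l + 2) ^ (l + 1) ≤ (a (l + 1) ^ 2) ^ (l + 1) := by
      rw [← mul_pow]; gcongr
    refine le_of_mul_le_mul_left (a := a l ^ (l + 1)) ?_ (by positivity)
    calc a l ^ (l + 1) * (a (l + 1 + 1) ^ (l + 1) * a 0)
        = (a l ^ (l + 1) * a (l + 2) ^ (l + 1)) * a 0 := by ring
      _ ≤ (a (l + 1) ^ 2) ^ (l + 1) * a 0 := by gcongr
      _ = a (l + 1) ^ (l + 2) * (a (l + 1) ^ l * a 0) := by ring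
      _ ≤ a (l + 1) ^ (l + 2) * a l ^ (l + 1) := by gcongr
      _ = a l ^ (l + 1) * a (l + 1) ^ (l + 1 + 1) := by ring

theorem logconcave (a : ℕ → ℝ) (l k : ℕ) (hlk : l ≤ k) (hpos : ∀ i, i ≤ k → 0 < a i)
    (hlc : ∀ i, i + 2 ≤ k → a i * a (i + 2) ≤ a (i + 1) ^ 2) :
    a k ^ l * a 0 ^ (k - l) ≤ a l ^ k := by
  induction k, hlk using Nat.le_induction with
  | base => simp
  | succ k hk ih =>
    have ih := ih (fun i hi => hpos i (by omega)) (fun i hi => hlc i (by omega))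
    have hs := logconcave_step a (k + 1) hpos hlc k le_rfl
    have h0 := hpos 0 (by omega)
    have h1 := hpos k (by omega)
    have h2 := hpos (k + 1) (by omega)
    have h3 := hpos l (by omega)
    rcases Nat.eq_zero_or_pos k with rfl | hkp
    · obtain rfl : l = 0 := by omega
      simp
    refine le_of_pow_le_pow_left₀ (n := k) (by omega) (by positivity) ?_
    obtain ⟨d, rfl⟩ := Nat.exists_eq_add_of_le hk
    have e1 : l + d + 1 - l = d + 1 := by omega
    have e2 : l + d - l = d := by omega
    rw [e1]; rw [e2] at ih
    calc (a (l + d + 1) ^ l * a 0 ^ (d + 1)) ^ (l + d)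
        = (a (l + d + 1) ^ (l + d) * a 0) ^ l * a 0 ^ (d * (l + d + 1)) := by ring
      _ ≤ (a (l + d) ^ (l + d + 1)) ^ l * a 0 ^ (d * (l + d + 1)) := by gcongr
      _ = (a (l + d) ^ l * a 0 ^ d) ^ (l + d + 1) := by ring
      _ ≤ (a l ^ (l + d)) ^ (l + d + 1) := by gcongr
      _ = (a l ^ (l + d + 1)) ^ (l + d) := by ring

theorem deriv_ne_zero (P : Polynomial ℂ) (hr : ∀ z : ℂ, 0 ≤ z.im → P.eval z ≠ 0)
    (m : ℕ) (hm : 1 ≤ m) (hc : P.coeff m ≠ 0) : P.coeff 1 ≠ 0 := by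
  have hP : P ≠ 0 := by rintro rfl; simp at hc
  have h0 : P.eval 0 ≠ 0 := hr 0 (by simp)
  have hdeg : 1 ≤ P.natDegree := hm.trans (Polynomial.le_natDegree_of_ne_zero hc)
  have hs := Polynomial.Splits.eval_derivative_div_eval_of_ne_zero (IsAlgClosed.splits P) h0
  intro h1
  have hd : P.derivative.eval 0 = 0 := by
    rw [← Polynomial.coeff_zero_eq_eval_zero, Polynomial.coeff_derivative]; simp [h1]
  rw [hd, zero_div] at hs
  have him := congrArg Complex.imAddGroupHom hs
  rw [map_multiset_sum, Multiset.map_map, map_zero] at him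
  have hcard : P.roots.card = P.natDegree := (IsAlgClosed.splits P).natDegree_eq_card_roots.symm
  have hne : P.roots ≠ 0 := by
    intro h; rw [h] at hcard; simp at hcard; omega
  have : (P.roots.map (⇑Complex.imAddGroupHom ∘ fun z => 1 / (0 - z))).sum <
      (P.roots.map (fun _ => (0:ℝ))).sum := by
    refine Multiset.sum_lt_sum_of_nonempty hne ?_
    intro z hz
    have hz' : z.im < 0 := by
      by_contra h
      exact hr z (not_lt.mp h) ((Polynomial.mem_roots hP).mp hz)
    have hz0 : z ≠ 0 := by rintro rfl; simp at hz'
    have := Complex.normSq_pos.mpr hz0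
    simp [Complex.inv_im]
    exact div_pos (by linarith) this
  simp at this
  simp at him
  linarith

variable {n : ℕ}

noncomputable def mdML : MultilinearMap ℂ (fun _ : Fin n => Matrix (Fin n) (Fin n) ℂ) ℂ :=
  (n.factorial : ℂ)⁻¹ • ∑ σ : Equiv.Perm (Fin n),
    ((Matrix.detRowAlternating (n := Fin n) (R := ℂ)).toMultilinearMap.compLinearMap
      (fun j : Fin n => LinearMap.pi fun i => Matrix.entryLinearMap ℂ ℂ i j)).domDomCongr σ

theorem mdML_apply (A : Fin n → Matrix (Fin n) (Fin n) ℂ) : mdML A = mixedDisc A := by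
  simp only [mdML, mixedDisc, _root_.smul_apply, _root_.sum_apply, smul_eq_mul]
  congr 1
  refine Finset.sum_congr rfl fun σ _ => ?_
  rw [← Matrix.det_transpose]
  rfl

theorem md_perm (A : Fin n → Matrix (Fin n) (Fin n) ℂ) (τ : Equiv.Perm (Fin n)) :
    mixedDisc (fun i => A (τ i)) = mixedDisc A := by
  unfold mixedDisc
  congr 1
  exact Fintype.sum_equiv (Equiv.mulLeft τ) _ _ (fun σ => rfl)

theorem md_const (M : Matrix (Fin n) (Fin n) ℂ) : mixedDisc (fun _ => M) = M.det := by
  unfold mixedDisc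
  have : (Matrix.of fun i j => M i j) = M := rfl
  simp only [this, Finset.sum_const, Finset.card_univ, Fintype.card_perm, Fintype.card_fin,
    nsmul_eq_mul]
  rw [inv_mul_cancel_left₀ (by exact_mod_cast n.factorial_ne_zero)]

theorem md_conj (A : Fin n → Matrix (Fin n) (Fin n) ℂ) (hA : ∀ i, (A i).IsHermitian) :
    (starRingEnd ℂ) (mixedDisc A) = mixedDisc A := by
  unfold mixedDisc
  rw [map_mul, map_inv₀, map_natCast, map_sum]
  congr 1
  simp only [Matrix.det_apply', map_sum, map_mul, map_prod, Matrix.of_apply, map_intCast]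
  have h : ∀ i a b, (starRingEnd ℂ) (A i a b) = A i b a := fun i a b => (hA i).apply b a
  simp only [h]
  rw [Finset.sum_comm]
  conv_rhs => rw [Finset.sum_comm]
  refine Fintype.sum_equiv (Equiv.inv _) _ _ (fun τ => ?_)
  refine Fintype.sum_equiv (Equiv.mulRight τ⁻¹) _ _ (fun σ => ?_)
  simp only [Equiv.inv_apply, Equiv.Perm.sign_inv, Equiv.coe_mulRight, Equiv.Perm.mul_apply]
  congr 1
  refine Fintype.prod_equiv τ _ _ (fun j => ?_)
  simp

theorem md_continuous : Continuous (mixedDisc : (Fin n → Matrix (Fin n) (Fin n) ℂ) → ℂ) := by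
  unfold mixedDisc
  refine continuous_const.mul (continuous_finsetSum _ fun σ _ => ?_)
  refine Continuous.matrix_det ?_
  refine continuous_matrix fun i j => ?_
  simp only [Matrix.of_apply]
  exact (continuous_apply_apply i j).comp (continuous_apply (σ j))

theorem det_ne_zero (H P : Matrix (Fin n) (Fin n) ℂ) (hH : H.IsHermitian) (hP : P.PosDef) :
    (H + Complex.I • P).det ≠ 0 := by
  intro h
  obtain ⟨v, hv, hv0⟩ := Matrix.exists_mulVec_eq_zero_iff.mpr h
  have h1 : star v ⬝ᵥ ((H + Complex.I • P) *ᵥ v) = 0 := by rw [hv0]; simp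
  rw [Matrix.add_mulVec, dotProduct_add, Matrix.smul_mulVec, dotProduct_smul] at h1
  have hpos := hP.dotProduct_mulVec_pos hv
  have hre : (star v ⬝ᵥ (H *ᵥ v)).im = 0 := hH.im_star_dotProduct_mulVec_self v
  rw [Complex.lt_def] at hpos
  have := congrArg Complex.im h1
  simp [hre] at this
  simp at hpos
  linarith [hpos.1]

theorem md_expand (S : Finset (Fin n)) (M C : Matrix (Fin n) (Fin n) ℂ)
    (E : Fin n → Matrix (Fin n) (Fin n) ℂ) (t : ℂ) :
    mixedDisc (S.piecewise (fun _ => M + t • C) E) =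
      ∑ s ∈ S.powerset, t ^ s.card *
        mixedDisc (s.piecewise (fun _ => C) (S.piecewise (fun _ => M) E)) := by
  have h := (mdML (n := n)).map_piecewise_add (fun _ => t • C) (S.piecewise (fun _ => M) E) S
  have e : S.piecewise ((fun _ => t • C) + S.piecewise (fun _ => M) E)
      (S.piecewise (fun _ => M) E) = S.piecewise (fun _ => M + t • C) E := by
    funext i
    by_cases hi : i ∈ S <;> simp [hi, add_comm]
  rw [e, mdML_apply] at h
  rw [h]
  refine Finset.sum_congr rfl fun s _ => ?_
  have h2 := (mdML (n := n)).map_piecewise_smul (fun _ => t)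
    (s.piecewise (fun _ => C) (S.piecewise (fun _ => M) E)) s
  rw [Finset.prod_const, mdML_apply, mdML_apply, smul_eq_mul] at h2
  rw [← h2, mdML_apply]
  congr 1
  funext i
  by_cases hi : i ∈ s <;> simp [hi]

theorem md_swap (E : Fin n → Matrix (Fin n) (Fin n) ℂ) (p q : Fin n)
    (X Y : Matrix (Fin n) (Fin n) ℂ) (hpq : p ≠ q) :
    mixedDisc (Function.update (Function.update E p X) q Y) =
      mixedDisc (Function.update (Function.update E p Y) q X) := by
  rw [← md_perm _ (Equiv.swap p q)]
  congr 1
  funext i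
  by_cases h1 : i = p
  · subst h1; simp [hpq]
  by_cases h2 : i = q
  · subst h2; simp [hpq]
  rw [Equiv.swap_apply_of_ne_of_ne h1 h2]
  simp [h1, h2]

theorem stable (S : Finset (Fin n)) : ∀ (E : Fin n → Matrix (Fin n) (Fin n) ℂ),
    (∀ i, i ∉ S → (E i).PosDef) → ∀ H P : Matrix (Fin n) (Fin n) ℂ, H.IsHermitian → P.PosDef →
    mixedDisc (S.piecewise (fun _ => H + Complex.I • P) E) ≠ 0 := by
  induction hk : Sᶜ.card generalizing S with
  | zero =>
    intro E _ H P hH hP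
    obtain rfl : S = Finset.univ := by simpa using hk
    rw [Finset.piecewise_univ, md_const]
    exact det_ne_zero H P hH hP
  | succ k ih =>
    intro E hE H P hH hP
    obtain ⟨q, hq⟩ : Sᶜ.Nonempty := Finset.card_pos.mp (by omega)
    have hqS : q ∉ S := Finset.mem_compl.mp hq
    have hC : (E q).PosDef := hE q hqS
    set C := E q with hCdef
    set M := H + Complex.I • P with hM
    set T := insert q S with hT
    have ihT := ih T (by
      rw [Finset.compl_insert, Finset.card_erase_of_mem hq]; omega) E
      (fun i hi => hE i (fun h => hi (Finset.mem_insert_of_mem h)))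
    set m' := T.piecewise (fun _ => M) E with hm'
    let p : Polynomial ℂ := ∑ s ∈ T.powerset,
      Polynomial.monomial s.card (mixedDisc (s.piecewise (fun _ => C) m'))
    have hev : ∀ z : ℂ, p.eval z = mixedDisc (T.piecewise (fun _ => M + z • C) E) := by
      intro z
      rw [md_expand, Polynomial.eval_finsetSum]
      refine Finset.sum_congr rfl fun s _ => ?_
      rw [Polynomial.eval_monomial, mul_comm]
    have hroots : ∀ z : ℂ, 0 ≤ z.im → p.eval z ≠ 0 := by
      intro z hz
      rw [hev]
      have e : M + z • C = (H + (z.re : ℂ) • C) + Complex.I • (P + (z.im : ℂ) • C) := by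
        rw [hM]
        conv_lhs => rw [← Complex.re_add_im z]
        module
      rw [e]
      refine ihT _ _ (hH.add ?_) (hP.add_posSemidef ?_)
      · exact (hC.isHermitian).smul (by simp [isSelfAdjoint_iff])
      · exact hC.posSemidef.smul (by exact_mod_cast hz)
    have hTc : 1 ≤ T.card := Finset.card_pos.mpr ⟨q, Finset.mem_insert_self _ _⟩
    have htop : p.coeff T.card ≠ 0 := by
      have e : p.coeff T.card = mixedDisc (T.piecewise (fun _ => C) E) := by
        rw [Polynomial.finsetSum_coeff, Finset.sum_eq_single T]
        · rw [Polynomial.coeff_monomial_same]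
          congr 1
          funext i
          by_cases hi : i ∈ T <;> simp [hi, hm']
        · intro s hs hne
          rw [Polynomial.coeff_monomial, if_neg]
          intro hc
          exact hne (Finset.eq_of_subset_of_card_le (Finset.mem_powerset.mp hs) hc.ge)
        · intro h; simp at h
      rw [e]
      have h1 := ihT 0 C Matrix.isHermitian_zero hC
      intro h0
      apply h1
      have h2 := (mdML (n := n)).map_piecewise_smul (fun _ => Complex.I)
        (T.piecewise (fun _ => C) E) T
      rw [mdML_apply, mdML_apply, h0, smul_zero] at h2
      rw [← h2]
      congr 1
      funext i
      by_cases hi : i ∈ T <;> simp [hi]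
    have h1 := deriv_ne_zero p hroots T.card hTc htop
    intro h0
    apply h1
    rw [Polynomial.finsetSum_coeff]
    refine Finset.sum_eq_zero fun s hs => ?_
    rw [Polynomial.coeff_monomial]
    split_ifs with hc
    · obtain ⟨r, rfl⟩ := Finset.card_eq_one.mp hc
      have hr : r ∈ T := by simpa using hs
      rw [← h0, ← md_perm _ (Equiv.swap q r)]
      congr 1
      funext i
      by_cases hir : i = r
      · subst hir
        rw [Equiv.swap_apply_right]
        by_cases hqi : q = i
        · subst hqi
          simp [hqS, hCdef]
        · have : i ∈ S := by
            rcases Finset.mem_insert.mp hr with h | h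
            · exact absurd h.symm hqi
            · exact h
          simp [hqi, hm', hT, this]
      · by_cases hiq : i = q
        · subst hiq
          simp [hqS, hCdef]
        · rw [Equiv.swap_apply_of_ne_of_ne hiq hir]
          by_cases hiS : i ∈ S <;> simp [hir, hm', hT, hiS, hiq]
    · rfl

theorem md_ne_zero (E : Fin n → Matrix (Fin n) (Fin n) ℂ) (hE : ∀ i, (E i).PosDef) :
    mixedDisc E ≠ 0 := by
  have := stable ∅ E (fun i _ => hE i) 0 1 Matrix.isHermitian_zero Matrix.PosDef.one
  simpa using this

theorem md_ofReal (E : Fin n → Matrix (Fin n) (Fin n) ℂ) (hE : ∀ i, (E i).PosDef) :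
    ((mixedDiscR E : ℝ) : ℂ) = mixedDisc E :=
  Complex.conj_eq_iff_re.mp (md_conj E fun i => (hE i).isHermitian)

theorem mdR_continuous : Continuous (mixedDiscR : (Fin n → Matrix (Fin n) (Fin n) ℂ) → ℝ) :=
  Complex.continuous_re.comp md_continuous

theorem mdR_pos (E : Fin n → Matrix (Fin n) (Fin n) ℂ) (hE : ∀ i, (E i).PosDef) :
    0 < mixedDiscR E := by
  let g : ℝ → Fin n → Matrix (Fin n) (Fin n) ℂ := fun t i => ((1 - t : ℝ) : ℂ) • 1 + (t : ℂ) • E i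
  have hg : Continuous g := by
    refine continuous_pi fun i => ?_
    fun_prop
  have hpd : ∀ t ∈ Set.Icc (0 : ℝ) 1, ∀ i, (g t i).PosDef := by
    rintro t ⟨h0, h1⟩ i
    rcases h0.eq_or_lt with rfl | h0
    · simpa [g] using Matrix.PosDef.one
    · exact Matrix.PosDef.posSemidef_add
        (Matrix.PosDef.one.posSemidef.smul (by exact_mod_cast (by linarith : (0:ℝ) ≤ 1 - t)))
        ((hE i).smul (by exact_mod_cast h0))
  have hz : ∀ t ∈ Set.Icc (0 : ℝ) 1, mixedDiscR (g t) ≠ 0 := by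
    intro t ht h
    apply md_ne_zero (g t) (hpd t ht)
    rw [← md_ofReal _ (hpd t ht), h]; simp
  have h0 : mixedDiscR (g 0) = 1 := by
    have : g 0 = fun _ => 1 := by funext i; simp [g]
    rw [this, mixedDiscR, md_const]; simp
  have h1 : g 1 = E := by funext i; simp [g]
  by_contra hneg
  have hivt := intermediate_value_Icc' (zero_le_one' ℝ)
    (f := fun t => mixedDiscR (g t)) (mdR_continuous.comp hg).continuousOn
  obtain ⟨t, ht, hte⟩ := hivt (show (0:ℝ) ∈ Set.Icc _ _ from
    ⟨by simp only [h1]; exact not_lt.mp hneg, by simp only [h0]; exact zero_le_one⟩)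
  exact hz t ht hte

theorem af (E : Fin n → Matrix (Fin n) (Fin n) ℂ) (hE : ∀ i, (E i).PosDef)
    (A B : Matrix (Fin n) (Fin n) ℂ) (hA : A.PosDef) (hB : B.PosDef) (p q : Fin n) (hpq : p ≠ q) :
    mixedDiscR (Function.update (Function.update E p B) q B) *
      mixedDiscR (Function.update (Function.update E p A) q A) ≤
      mixedDiscR (Function.update (Function.update E p A) q B) ^ 2 := by
  have hpd : ∀ X Y : Matrix (Fin n) (Fin n) ℂ, X.PosDef → Y.PosDef →
      ∀ i, (Function.update (Function.update E p X) q Y i).PosDef := by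
    intro X Y hX hY i
    by_cases h1 : i = q
    · subst h1; simpa using hY
    by_cases h2 : i = p
    · subst h2; simpa [h1] using hX
    simpa [h1, h2] using hE i
  have hBB := md_ofReal _ (hpd B B hB hB)
  have hAA := md_ofReal _ (hpd A A hA hA)
  have hAB := md_ofReal _ (hpd A B hA hB)
  have pBB := mdR_pos _ (hpd B B hB hB)
  set α := mixedDiscR (Function.update (Function.update E p A) q A)
  set β := mixedDiscR (Function.update (Function.update E p A) q B)
  set γ := mixedDiscR (Function.update (Function.update E p B) q B)
  by_contra hlt
  push Not at hlt
  set d := Real.sqrt (γ * α - β ^ 2)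
  have hd : 0 < d := Real.sqrt_pos.mpr (by linarith)
  have hd2 : d ^ 2 = γ * α - β ^ 2 := Real.sq_sqrt (by linarith)
  have hexp : ∀ t : ℂ, mixedDisc (Function.update (Function.update E p (A + t • B)) q (A + t • B))
      = α + 2 * β * t + γ * t ^ 2 := by
    intro t
    have hsw := md_swap E p q A B hpq
    rw [hAA, hAB, hBB, two_mul]
    nth_rewrite 2 [hsw]
    simp only [← mdML_apply]
    rw [MultilinearMap.map_update_add, MultilinearMap.map_update_smul]
    rw [Function.update_comm hpq, Function.update_comm hpq]
    rw [MultilinearMap.map_update_add, MultilinearMap.map_update_smul,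
      MultilinearMap.map_update_add, MultilinearMap.map_update_smul]
    simp only [smul_eq_mul, Function.update_comm hpq]
    ring
  let x : ℝ := -β / γ
  let y : ℝ := d / γ
  have hy : 0 < y := div_pos hd pBB
  have hne := stable {p, q} E (fun i _ => hE i) (A + (x : ℂ) • B) ((y : ℂ) • B)
    (hA.isHermitian.add (hB.isHermitian.smul (by simp [isSelfAdjoint_iff])))
    (hB.smul (by exact_mod_cast hy))
  apply hne
  have e : ({p, q} : Finset (Fin n)).piecewise
      (fun _ => A + (x : ℂ) • B + Complex.I • (y : ℂ) • B) E =
      Function.update (Function.update E p (A + ((x : ℂ) + Complex.I * y) • B)) q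
        (A + ((x : ℂ) + Complex.I * y) • B) := by
    have e1 : A + (x : ℂ) • B + Complex.I • (y : ℂ) • B = A + ((x : ℂ) + Complex.I * y) • B := by
      module
    rw [e1]
    funext i
    by_cases h1 : i = q
    · subst h1; simp
    by_cases h2 : i = p
    · subst h2; simp [h1]
    simp [h1, h2]
  rw [e, hexp]
  have hx : γ * x = -β := by simp only [x]; field_simp
  have hy' : γ * y = d := by simp only [y]; field_simp
  have hr : γ * (α + 2 * β * x + γ * (x ^ 2 - y ^ 2)) = 0 := by
    linear_combination (2 * β + γ * x - β) * hx - (γ * y + d) * hy' - hd2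
  have hr' : α + 2 * β * x + γ * (x ^ 2 - y ^ 2) = 0 := by
    rcases mul_eq_zero.mp hr with h | h
    · exact absurd h pBB.ne'
    · exact h
  have hi' : 2 * β * y + 2 * γ * x * y = 0 := by linear_combination 2 * y * hx
  have : (α : ℂ) + 2 * β * (x + Complex.I * y) + γ * (x + Complex.I * y) ^ 2 =
      ((α + 2 * β * x + γ * (x ^ 2 - y ^ 2) : ℝ) : ℂ) +
        ((2 * β * y + 2 * γ * x * y : ℝ) : ℂ) * Complex.I := by
    push_cast
    linear_combination (γ : ℂ) * y ^ 2 * Complex.I_sq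
  rw [this, hr', hi']
  simp

theorem main_posDef (l k : ℕ) (hlk : l ≤ k) (hkn : k ≤ n)
    (A B : Matrix (Fin n) (Fin n) ℂ) (hA : A.PosDef) (hB : B.PosDef)
    (C : Fin n → Matrix (Fin n) (Fin n) ℂ) (hC : ∀ i : Fin n, k ≤ (i : ℕ) → (C i).PosDef) :
    mixedDiscR (fun i => if (i : ℕ) < k then A else C i) ^ l
        * mixedDiscR (fun i => if (i : ℕ) < k then B else C i) ^ (k - l)
      ≤ mixedDiscR (fun i => if (i : ℕ) < l then A else if (i : ℕ) < k then B else C i) ^ k := by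
  let F : ℕ → Fin n → Matrix (Fin n) (Fin n) ℂ := fun m i =>
    if (i : ℕ) < m then A else if (i : ℕ) < k then B else C i
  have hF : ∀ m i, (F m i).PosDef := by
    intro m i
    simp only [F]
    split_ifs with h1 h2
    · exact hA
    · exact hB
    · exact hC i (not_lt.mp h2)
  have h := logconcave (fun m => mixedDiscR (F m)) l k hlk (fun i _ => mdR_pos _ (hF i)) (by
    intro m hm
    have h := af (F m) (hF m) A B hA hB ⟨m, by omega⟩ ⟨m + 1, by omega⟩ (by simp)
    have e0 : Function.update (Function.update (F m) ⟨m, by omega⟩ B) ⟨m + 1, by omega⟩ B = F m := by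
      funext i
      simp only [Function.update_apply, F, Fin.ext_iff]
      split_ifs <;> first | rfl | omega
    have e1 : Function.update (Function.update (F m) ⟨m, by omega⟩ A) ⟨m + 1, by omega⟩ B
        = F (m + 1) := by
      funext i
      simp only [Function.update_apply, F, Fin.ext_iff]
      split_ifs <;> first | rfl | omega
    have e2 : Function.update (Function.update (F m) ⟨m, by omega⟩ A) ⟨m + 1, by omega⟩ A
        = F (m + 2) := by
      funext i
      simp only [Function.update_apply, F, Fin.ext_iff]
      split_ifs <;> first | rfl | omega
    rw [e0, e1, e2] at h
    exact h)
  have hk : F k = fun i : Fin n => if (i : ℕ) < k then A else C i := by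
    funext i
    simp only [F]
    split_ifs <;> rfl
  have h0 : F 0 = fun i : Fin n => if (i : ℕ) < k then B else C i := by
    funext i
    simp [F]
  simp only [hk, h0] at h
  exact h

end AFProof


/-- Iterated Alexandrov–Fenchel inequality: for `0 ≤ l ≤ k ≤ n` and positive semi-definite
`A, B, A⁽ᵏ⁺¹⁾, …, A⁽ⁿ⁾`,
`D(A[l], B[k-l], rest)^k ≥ D(A[k], rest)^l · D(B[k], rest)^(k-l)`. -/
theorem alexandrov_fenchel_iterated {n : ℕ} (hn : 1 ≤ n) (l k : ℕ) (hlk : l ≤ k) (hkn : k ≤ n)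
    (A B : Matrix (Fin n) (Fin n) ℂ) (hA : A.PosSemidef) (hB : B.PosSemidef)
    (C : Fin n → Matrix (Fin n) (Fin n) ℂ) (hC : ∀ i : Fin n, k ≤ (i : ℕ) → (C i).PosSemidef) :
    mixedDiscR (fun i => if (i : ℕ) < k then A else C i) ^ l
        * mixedDiscR (fun i => if (i : ℕ) < k then B else C i) ^ (k - l)
      ≤ mixedDiscR (fun i => if (i : ℕ) < l then A else if (i : ℕ) < k then B else C i) ^ k := by
  let e : Matrix (Fin n) (Fin n) ℂ → ℝ → Matrix (Fin n) (Fin n) ℂ := fun X t => X + (t : ℂ) • 1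
  have he : ∀ X, Continuous (e X) := fun X => by simp only [e]; fun_prop
  have he0 : ∀ X, e X 0 = X := fun X => by simp [e]
  have hpd : ∀ X, X.PosSemidef → ∀ t : ℝ, 0 < t → (e X t).PosDef := fun X hX t ht =>
    Matrix.PosDef.posSemidef_add hX (Matrix.PosDef.one.smul (by exact_mod_cast ht))
  have hc1 : Continuous fun t : ℝ =>
      mixedDiscR (fun i : Fin n => if (i : ℕ) < k then e A t else e (C i) t) := by
    refine AFProof.mdR_continuous.comp (continuous_pi fun i => ?_)
    split_ifs <;> exact he _
  have hc2 : Continuous fun t : ℝ =>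
      mixedDiscR (fun i : Fin n => if (i : ℕ) < k then e B t else e (C i) t) := by
    refine AFProof.mdR_continuous.comp (continuous_pi fun i => ?_)
    split_ifs <;> exact he _
  have hc3 : Continuous fun t : ℝ => mixedDiscR (fun i : Fin n =>
      if (i : ℕ) < l then e A t else if (i : ℕ) < k then e B t else e (C i) t) := by
    refine AFProof.mdR_continuous.comp (continuous_pi fun i => ?_)
    split_ifs <;> exact he _
  have hL := (((hc1.pow l).mul (hc2.pow (k - l))).tendsto 0).mono_left
    (nhdsWithin_le_nhds (s := Set.Ioi 0))
  have hR := ((hc3.pow k).tendsto 0).mono_left (nhdsWithin_le_nhds (s := Set.Ioi 0))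
  have hle := le_of_tendsto_of_tendsto hL hR (by
    filter_upwards [self_mem_nhdsWithin] with t ht
    exact AFProof.main_posDef l k hlk hkn (e A t) (e B t) (hpd A hA t ht) (hpd B hB t ht)
      (fun i => e (C i) t) (fun i hi => hpd _ (hC i hi) t ht))
  simpa only [Pi.mul_apply, Pi.pow_apply, he0] using hle
end

section
/- (General Brunn–Minkowski theorem for mixed discriminants.) Let n ≥ 1, 1 ≤ k ≤ n, and fix n×n Hermitian positive semi-definite matrices A^(k+1),…,A^(n). Then the function A ↦ D(A,…,A [k copies], A^(k+1),…,A^(n))^(1/k) is concave on the convex cone of n×n Hermitian positive semi-definite matrices; that is, for all Hermitian positive semi-definite A, B and τ ∈ [0,1], D(τA+(1−τ)B,…,τA+(1−τ)B [k copies], A^(k+1),…,A^(n))^(1/k) ≥ τ·D(A,…,A [k copies], A^(k+1),…,A^(n))^(1/k) + (1−τ)·D(B,…,B [k copies], A^(k+1),…,A^(n))^(1/k). -/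
open Matrix MeasureTheory Finset ProbabilityTheory
open scoped Classical ComplexOrder

noncomputable section

namespace MDAux

variable {n : ℕ}

abbrev Mat (n : ℕ) := Matrix (Fin n) (Fin n) ℂ

def colDet (n : ℕ) : MultilinearMap ℂ (fun _ : Fin n => Mat n) ℂ :=
  (Matrix.detRowAlternating (n := Fin n) (R := ℂ)).toMultilinearMap.compLinearMap
    (fun j => { toFun := fun M i => M i j, map_add' := fun _ _ => rfl, map_smul' := fun _ _ => rfl })

def md (n : ℕ) : MultilinearMap ℂ (fun _ : Fin n => Mat n) ℂ :=
  (n.factorial : ℂ)⁻¹ • ∑ σ : Equiv.Perm (Fin n), (colDet n).domDomCongr σ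

lemma md_apply (A : Fin n → Mat n) : md n A = mixedDisc A := by
  unfold md mixedDisc
  simp only [MultilinearMap.smul_apply, MultilinearMap.sum_apply, smul_eq_mul]
  congr 1
  refine Finset.sum_congr rfl fun σ _ => ?_
  rw [← Matrix.det_transpose]
  rfl

lemma md_perm (A : Fin n → Mat n) (π : Equiv.Perm (Fin n)) :
    md n (fun i => A (π i)) = md n A := by
  rw [md_apply, md_apply]
  unfold mixedDisc
  congr 1
  exact Fintype.sum_equiv (Equiv.mulLeft π) _ _ (fun σ => rfl)

lemma md_const (A : Mat n) : md n (fun _ => A) = A.det := by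
  rw [md_apply]
  unfold mixedDisc
  have : (Matrix.of fun i j => A i j) = A := rfl
  simp only [this, Finset.sum_const, Finset.card_univ, Fintype.card_perm, Fintype.card_fin,
    nsmul_eq_mul]
  rw [inv_mul_cancel_left₀]
  exact_mod_cast n.factorial_ne_zero

def fam (C : Fin n → Mat n) (j : ℕ) (M : Mat n) : Fin n → Mat n :=
  fun i => if (i : ℕ) < j then M else C i

def P (C : Fin n → Mat n) (j : ℕ) (M : Mat n) : ℂ := md n (fam C j M)

def low (n j : ℕ) : Finset (Fin n) := Finset.univ.filter fun i => (i : ℕ) < j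

lemma card_low {j : ℕ} (hj : j ≤ n) : (low n j).card = j := by
  unfold low
  rw [Fin.card_filter_val_lt]
  omega

lemma P_smul (C : Fin n → Mat n) {j : ℕ} (hj : j ≤ n) (c : ℂ) (M : Mat n) :
    P C j (c • M) = c ^ j * P C j M := by
  have h := (md n).map_piecewise_smul (fun _ => c) (fam C j M) (low n j)
  rw [Finset.prod_const, card_low hj, smul_eq_mul] at h
  rw [P, P, ← h]
  congr 1
  funext i
  by_cases hi : (i : ℕ) < j <;> simp [fam, low, Finset.piecewise, hi]

lemma update_perm (C : Fin n → Mat n) {j : ℕ} (A B : Mat n) (i₀ i : Fin n)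
    (h0 : (i₀ : ℕ) < j) (hi : (i : ℕ) < j) :
    md n (Function.update (fam C j A) i B) = md n (Function.update (fam C j A) i₀ B) := by
  rw [← md_perm _ (Equiv.swap i i₀)]
  congr 1
  funext l
  simp only [Function.update_apply, fam, Equiv.swap_apply_def]
  split_ifs <;> simp_all

open Polynomial in
lemma exists_poly (C : Fin n → Mat n) {j : ℕ} (hj : j ≤ n) (A B : Mat n) :
    ∃ p : ℂ[X], p.natDegree ≤ j ∧ p.coeff j = P C j B ∧
      (∀ i₀ : Fin n, (i₀ : ℕ) < j →
        p.coeff 1 = j * md n (Function.update (fam C j A) i₀ B)) ∧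
      ∀ s : ℂ, p.eval s = P C j (A + s • B) := by
  set b : Fin n → Mat n := fun i => if (i : ℕ) < j then B else 0 with hb
  set a := fam C j A with ha
  have hzero : ∀ T : Finset (Fin n), ¬ T ⊆ low n j → md n (T.piecewise b a) = 0 := by
    intro T hT
    obtain ⟨i, hiT, hi⟩ := Finset.not_subset.1 hT
    apply (md n).map_coord_zero i
    have : ¬ (i : ℕ) < j := by simpa [low] using hi
    simp [hiT, hb, this]
  refine ⟨∑ T : Finset (Fin n), monomial T.card (md n (T.piecewise b a)), ?_, ?_, ?_, ?_⟩
  · apply natDegree_sum_le_of_forall_le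
    intro T _
    by_cases hT : T ⊆ low n j
    · refine (natDegree_monomial_le _).trans ?_
      exact (Finset.card_le_card hT).trans (card_low hj).le
    · rw [hzero T hT]; simp
  · rw [finsetSum_coeff, Finset.sum_eq_single (low n j)]
    · rw [coeff_monomial, if_pos (card_low hj), P]
      congr 1
      funext i
      by_cases hi : (i : ℕ) < j <;> simp [fam, low, Finset.piecewise, hi, hb, ha]
    · intro T _ hT
      rw [coeff_monomial]
      split_ifs with hc
      · apply hzero
        intro hs
        exact hT (Finset.eq_of_subset_of_card_le hs (by rw [card_low hj, hc]))
      · rfl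
    · simp
  · intro i₀ h0
    rw [finsetSum_coeff]
    simp only [coeff_monomial]
    rw [← Finset.sum_filter]
    have h1 : (Finset.univ.filter fun T : Finset (Fin n) => T.card = 1)
        = Finset.univ.map ⟨fun i : Fin n => ({i} : Finset (Fin n)), Finset.singleton_injective⟩ := by
      ext T
      simp [Finset.card_eq_one, eq_comm]
    rw [h1, Finset.sum_map]
    simp only [Function.Embedding.coeFn_mk, Finset.piecewise_singleton]
    have h2 : ∀ i : Fin n, md n (Function.update a i (b i))
        = if i ∈ low n j then md n (Function.update a i₀ B) else 0 := by
      intro i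
      by_cases hi : (i : ℕ) < j
      · simp only [low, Finset.mem_filter, Finset.mem_univ, true_and, hi, if_true, hb]
        exact update_perm C A B i₀ i h0 hi
      · simp only [low, Finset.mem_filter, Finset.mem_univ, true_and, hi, if_false, hb]
        exact (md n).map_coord_zero i (by simp)
    simp only [h2]
    rw [Finset.sum_ite_mem, Finset.univ_inter, Finset.sum_const, card_low hj, nsmul_eq_mul]
  · intro s
    have h3 : fam C j (A + s • B) = (fun i => s • b i) + a := by
      funext i
      by_cases hi : (i : ℕ) < j <;> simp [fam, hi, hb, ha, add_comm]
    rw [P, h3, MultilinearMap.map_add_univ, eval_finsetSum]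
    refine Finset.sum_congr rfl fun T _ => ?_
    rw [eval_monomial]
    have h := (md n).map_piecewise_smul (fun _ => s) (T.piecewise b a) T
    rw [Finset.prod_const, smul_eq_mul] at h
    rw [mul_comm, ← h]
    congr 1
    funext i
    by_cases hi : i ∈ T <;> simp [hi]

def Good (C : Fin n → Mat n) (j : ℕ) : Prop :=
  (∀ X Y : Mat n, X.IsHermitian → Y.PosDef → P C j (X + Complex.I • Y) ≠ 0) ∧
    ∀ M : Mat n, M.PosDef → 0 < P C j M

lemma psmul {M : Mat n} (hM : M.PosDef) {r : ℝ} (hr : 0 < r) : ((r : ℂ) • M).PosDef :=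
  hM.smul (by exact_mod_cast hr)

lemma hsmul {M : Mat n} (hM : M.IsHermitian) (r : ℝ) : ((r : ℂ) • M).IsHermitian := by
  rw [Matrix.IsHermitian, Matrix.conjTranspose_smul, hM.eq]
  simp

lemma good_top (C : Fin n → Mat n) : Good C n := by
  have hP : ∀ M, P C n M = M.det := by
    intro M
    rw [P, ← md_const]
    congr 1
    funext i
    simp [fam]
  refine ⟨fun X Y hX hY h => ?_, fun M hM => ?_⟩
  · rw [hP] at h
    obtain ⟨v, hv, hv0⟩ := Matrix.exists_mulVec_eq_zero_iff.2 h
    have h1 : star v ⬝ᵥ ((X + Complex.I • Y) *ᵥ v) = 0 := by rw [hv0]; simp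
    rw [Matrix.add_mulVec, dotProduct_add, Matrix.smul_mulVec, dotProduct_smul] at h1
    have h2 := hX.im_star_dotProduct_mulVec_self v
    have h3 := hY.dotProduct_mulVec_pos hv
    have h4 := congrArg Complex.im h1
    rw [Complex.lt_def] at h3
    simp at h4 h2 h3
    rw [h2] at h4
    linarith [h3.1]
  · rw [hP]; exact hM.det_pos

lemma root_neg {C : Fin n → Mat n} {j : ℕ} (hj : j ≤ n) (hG : Good C j) {M E : Mat n}
    (hM : M.PosDef) (hE : E.PosDef) {s : ℂ} (hs : P C j (M + s • E) = 0) :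
    s.re < 0 ∧ s.im = 0 := by
  have him : s.im = 0 := by
    rcases lt_trichotomy s.im 0 with h | h | h
    · exfalso
      have h1 : (-1 : ℂ) • (M + s • E) = ((-1 : ℝ) : ℂ) • (M + (s.re : ℂ) • E)
          + Complex.I • (((-s.im : ℝ) : ℂ) • E) := by
        conv_lhs => rw [← Complex.re_add_im s]
        push_cast
        module
      have h2 := P_smul C hj (-1) (M + s • E)
      rw [hs, mul_zero, h1] at h2
      exact hG.1 _ _ (hsmul (hM.isHermitian.add (hsmul hE.isHermitian _)) _)
        (psmul hE (by linarith)) h2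
    · exact h
    · exfalso
      have h1 : M + s • E = (M + (s.re : ℂ) • E) + Complex.I • ((s.im : ℂ) • E) := by
        conv_lhs => rw [← Complex.re_add_im s]
        module
      rw [h1] at hs
      exact hG.1 _ _ (hM.isHermitian.add (hsmul hE.isHermitian _)) (psmul hE h) hs
  refine ⟨?_, him⟩
  by_contra hre
  push Not at hre
  have h1 : s = (s.re : ℂ) := by
    apply Complex.ext <;> simp [him]
  have h2 : (M + s • E).PosDef := by
    rw [h1]
    exact hM.add_posSemidef (hE.posSemidef.smul (by exact_mod_cast hre))
  exact (hG.2 _ h2).ne' hs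

open Polynomial in
lemma good_step {C : Fin n → Mat n} {j : ℕ} (hj : j < n) (hC : (C ⟨j, hj⟩).PosDef)
    (hG : Good C (j + 1)) : Good C j := by
  set E := C ⟨j, hj⟩ with hE
  have key : ∀ A : Mat n, P C (j+1) A ≠ 0 → ∃ p : ℂ[X], p.roots.card ≠ 0 ∧
      (∀ r ∈ p.roots, P C (j+1) (A + r • E) = 0) ∧
      (j + 1 : ℂ) * P C j A = P C (j+1) A * (p.roots.map fun z => 1 / (0 - z)).sum := by
    intro A hA
    obtain ⟨p, hd, hl, h1, hev⟩ := exists_poly C (Nat.succ_le_of_lt hj) A E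
    have hEpos := hG.2 E hC
    refine ⟨p, ?_, ?_, ?_⟩
    · rw [IsAlgClosed.card_roots_eq_natDegree]
      intro h0
      have : p.coeff (j+1) = 0 := coeff_eq_zero_of_natDegree_lt (by omega)
      rw [this] at hl
      exact hEpos.ne hl
    · intro r hr
      rw [← hev]
      exact (mem_roots'.1 hr).2
    · have h0 : p.eval 0 = P C (j+1) A := by rw [hev]; simp
      have h2 := (IsAlgClosed.splits p).eval_derivative_eq_eval_mul_sum (x := 0)
        (by rw [h0]; exact hA)
      rw [h0] at h2
      rw [← h2, ← coeff_zero_eq_eval_zero, coeff_derivative, zero_add, h1 ⟨j, hj⟩ (Nat.lt_succ_self j)]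
      simp only [Nat.cast_zero, zero_add, mul_one]
      push_cast
      congr 1
      rw [P]
      congr 1
      funext i
      by_cases hi : i = ⟨j, hj⟩
      · subst hi; simp [fam, hE]
      · have : (i : ℕ) ≠ j := fun h => hi (Fin.ext h)
        rw [Function.update_of_ne hi]
        simp only [fam]
        have : (i : ℕ) < j ↔ (i : ℕ) < j + 1 := by omega
        simp [this]
  have hj1 : (0 : ℂ) < (j + 1 : ℂ) := by exact_mod_cast Nat.succ_pos j
  refine ⟨fun X Y hX hY h => ?_, fun M hM => ?_⟩
  · have hne := hG.1 X Y hX hY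
    obtain ⟨p, hcard, hr, hsum⟩ := key _ hne
    rw [h, mul_zero] at hsum
    have hs0 := (mul_eq_zero.1 hsum.symm).resolve_left hne
    have hneg : ∀ r ∈ p.roots, (1 / (0 - r)).im < 0 := by
      intro r hrr
      have h1 := hr r hrr
      have him : r.im < 0 := by
        by_contra hc
        push Not at hc
        have h2 : X + Complex.I • Y + r • E = (X + (r.re : ℂ) • E)
            + Complex.I • (Y + (r.im : ℂ) • E) := by
          conv_lhs => rw [← Complex.re_add_im r]
          module
        rw [h2] at h1
        exact hG.1 _ _ (hX.add (hsmul hC.isHermitian _))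
          (hY.add_posSemidef (hC.posSemidef.smul (by exact_mod_cast hc))) h1
      have hr0 : 0 - r ≠ 0 := by
        intro h; have := congrArg Complex.im h; simp at this; linarith
      rw [one_div, Complex.inv_im]
      apply div_neg_of_neg_of_pos
      · simp [him]
      · exact Complex.normSq_pos.2 hr0
    have h3 : ((p.roots.map fun z => 1 / (0 - z)).sum).im
        = (p.roots.map fun z => (1 / (0 - z)).im).sum := by
      have := Multiset.sum_hom (p.roots.map fun z => 1 / (0 - z)) Complex.imAddGroupHom
      rw [Multiset.map_map] at this
      exact this.symm
    rw [hs0, Complex.zero_im] at h3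
    have h4 : (p.roots.map fun z => (1 / (0 - z)).im).sum < (p.roots.map fun _ => (0:ℝ)).sum :=
      Multiset.sum_lt_sum_of_nonempty (by rintro h; simp [h] at hcard) hneg
    simp only [Multiset.map_const', Multiset.sum_replicate, smul_zero] at h4
    linarith
  · have hpos := hG.2 M hM
    obtain ⟨p, hcard, hr, hsum⟩ := key _ hpos.ne'
    have hneg : ∀ r ∈ p.roots, 0 < (1 / (0 - r)) := by
      intro r hrr
      obtain ⟨h1, h2⟩ := root_neg (Nat.succ_le_of_lt hj) hG hM hC (hr r hrr)
      have h3 : 0 - r = ((-r.re : ℝ) : ℂ) := by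
        apply Complex.ext <;> simp [h2]
      rw [h3, one_div, ← Complex.ofReal_inv]
      exact_mod_cast inv_pos.2 (by linarith)
    have h4 : (p.roots.map fun _ => (0:ℂ)).sum < (p.roots.map fun z => (1 / (0 - z))).sum :=
      Multiset.sum_lt_sum_of_nonempty (by rintro h; simp [h] at hcard) hneg
    simp only [Multiset.map_const', Multiset.sum_replicate, smul_zero] at h4
    have h5 : 0 < (j + 1 : ℂ) * P C j M := by rw [hsum]; exact mul_pos hpos h4
    have h6 : P C j M = (j + 1 : ℂ)⁻¹ * ((j + 1 : ℂ) * P C j M) := by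
      rw [inv_mul_cancel_left₀ hj1.ne']
    rw [h6]
    exact mul_pos (inv_pos.2 hj1) h5

lemma good_all {C : Fin n → Mat n} {k : ℕ} (hk : k ≤ n)
    (hC : ∀ i : Fin n, k ≤ (i : ℕ) → (C i).PosDef) : Good C k := by
  have : ∀ d j, j + d = n → k ≤ j → Good C j := by
    intro d
    induction d with
    | zero => intro j hj _; obtain rfl : j = n := by omega
              exact good_top C
    | succ d ih =>
      intro j hj hkj
      exact good_step (by omega) (hC _ hkj) (ih (j+1) (by omega) (by omega))
  exact this (n - k) k (by omega) le_rfl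

lemma geo {ι : Type*} [Fintype ι] (k : ℕ) (hk : 1 ≤ k) (hc : Fintype.card ι = k) (r : ι → ℝ)
    (hr : ∀ i, 0 < r i) {a b : ℝ} (ha : 0 < a) (hb : 0 ≤ b) :
    a * (∏ i, r i) ^ (1 / (k : ℝ)) + b ≤ (∏ i, (b + a * r i)) ^ (1 / (k : ℝ)) := by
  have hk0 : (0 : ℝ) < k := by exact_mod_cast hk
  have hpos : ∀ i, 0 < b + a * r i := fun i => by have := mul_pos ha (hr i); linarith
  have amgm : ∀ z : ι → ℝ, (∀ i, 0 ≤ z i) →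
      (∏ i, z i) ^ (1 / (k : ℝ)) ≤ ∑ i, (1 / (k : ℝ)) * z i := by
    intro z hz
    rw [← Real.finsetProd_rpow _ _ (fun i _ => hz i)]
    apply Real.geom_mean_le_arith_mean_weighted _ _ _ _ _ (fun i _ => hz i)
    · intro i _; positivity
    · simp [hc, hk0.ne']
  have h1 := amgm (fun i => r i / (b + a * r i)) (fun i => (div_pos (hr i) (hpos i)).le)
  have h2 := amgm (fun i => 1 / (b + a * r i)) (fun i => (div_pos one_pos (hpos i)).le)
  have hG : 0 < (∏ i, (b + a * r i)) ^ (1 / (k : ℝ)) :=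
    Real.rpow_pos_of_pos (Finset.prod_pos fun i _ => hpos i) _
  have hP0 : 0 ≤ ∏ i, (b + a * r i) := Finset.prod_nonneg fun i _ => (hpos i).le
  rw [Finset.prod_div_distrib, Real.div_rpow (Finset.prod_nonneg fun i _ => (hr i).le) hP0] at h1
  rw [Finset.prod_div_distrib, Real.div_rpow (by simp) hP0, Finset.prod_const_one,
    Real.one_rpow] at h2
  have h3 : a * ∑ i, (1 / (k : ℝ)) * (r i / (b + a * r i))
      + b * ∑ i, (1 / (k : ℝ)) * (1 / (b + a * r i)) = 1 := by
    rw [Finset.mul_sum, Finset.mul_sum, ← Finset.sum_add_distrib]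
    have : ∀ i ∈ (Finset.univ : Finset ι), a * ((1 / (k : ℝ)) * (r i / (b + a * r i)))
      + b * ((1 / (k : ℝ)) * (1 / (b + a * r i))) = 1 / k := by
      intro i _
      have := (hpos i).ne'
      field_simp
      ring
    rw [Finset.sum_congr rfl this]
    simp [hc, hk0.ne']
  have h4 := mul_le_mul_of_nonneg_left h1 ha.le
  have h5 := mul_le_mul_of_nonneg_left h2 hb
  have h6 : (a * (∏ i, r i) ^ (1 / (k : ℝ)) + b) / (∏ i, (b + a * r i)) ^ (1 / (k : ℝ)) ≤ 1 := by
    rw [add_div, mul_div_assoc]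
    rw [mul_one_div] at h5
    linarith
  exact (div_le_one hG).1 h6

open Polynomial in
lemma factor {C : Fin n → Mat n} {k : ℕ} (hk : k ≤ n) (hG : Good C k) {A B : Mat n}
    (hA : A.PosDef) (hB : B.PosDef) : ∃ r : Fin k → ℝ, (∀ i, 0 < r i) ∧
      ∀ s : ℝ, P C k (A + (s : ℂ) • B) = P C k B * ((∏ i, (s + r i) : ℝ) : ℂ) := by
  obtain ⟨p, hd, hl, -, hev⟩ := exists_poly C hk A B
  have hBpos := hG.2 B hB
  have hdeg : p.natDegree = k := by
    apply le_antisymm hd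
    apply le_natDegree_of_ne_zero
    rw [hl]; exact hBpos.ne'
  have hroots : ∀ z ∈ p.roots, z.re < 0 ∧ z.im = 0 := by
    intro z hz
    apply root_neg hk hG hA hB
    rw [← hev]
    exact (mem_roots'.1 hz).2
  have hlc : p.leadingCoeff = P C k B := by rw [leadingCoeff, hdeg, hl]
  have hcard : p.roots.toList.length = k := by
    rw [Multiset.length_toList, IsAlgClosed.card_roots_eq_natDegree, hdeg]
  subst hcard
  refine ⟨fun i => -(p.roots.toList.get i).re, ?_, ?_⟩
  · intro i
    have := (hroots _ (Multiset.mem_toList.1 (List.get_mem p.roots.toList i))).1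
    linarith
  · intro s
    rw [← hev]
    conv_lhs => rw [(IsAlgClosed.splits p).eq_prod_roots]
    rw [eval_mul, eval_C, hlc, eval_multiset_prod, Multiset.map_map]
    congr 1
    have hprod : ∀ g : ℂ → ℂ, (p.roots.map g).prod = ∏ i, g (p.roots.toList.get i) := by
      intro g
      have h : p.roots.map g = ((p.roots.toList.map g : List ℂ) : Multiset ℂ) := by
        rw [← Multiset.map_coe, Multiset.coe_toList]
      rw [h, Multiset.prod_coe, ← List.prod_ofFn]
      congr 1
      conv_lhs => rw [← List.ofFn_get p.roots.toList, List.map_ofFn]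
      rfl
    rw [hprod, Complex.ofReal_prod]
    refine Finset.prod_congr rfl fun i _ => ?_
    have := (hroots _ (Multiset.mem_toList.1 (List.get_mem p.roots.toList i))).2
    apply Complex.ext <;> simp at this ⊢
    · ring
    · exact this

lemma main_pd {C : Fin n → Mat n} {k : ℕ} (hk1 : 1 ≤ k) (hk : k ≤ n)
    (hC : ∀ i : Fin n, k ≤ (i : ℕ) → (C i).PosDef) {A B : Mat n}
    (hA : A.PosDef) (hB : B.PosDef) {τ : ℝ} (hτ0 : 0 ≤ τ) (hτ1 : τ ≤ 1) :
    τ * (P C k A).re ^ (1 / (k : ℝ)) + (1 - τ) * (P C k B).re ^ (1 / (k : ℝ))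
      ≤ (P C k ((τ : ℂ) • A + ((1 - τ : ℝ) : ℂ) • B)).re ^ (1 / (k : ℝ)) := by
  have hG := good_all hk hC
  rcases hτ0.eq_or_lt with rfl | hτ
  · simp
  obtain ⟨r, hr, hs⟩ := factor hk hG hA hB
  have hb := hG.2 B hB
  rw [Complex.lt_def] at hb
  have hb1 : 0 < (P C k B).re := hb.1
  have hbe : P C k B = ((P C k B).re : ℂ) := by
    apply Complex.ext <;> simp
    exact hb.2.symm
  have hAe : (P C k A).re = (P C k B).re * ∏ i, r i := by
    have h := hs 0
    simp only [Complex.ofReal_zero, zero_smul, add_zero, zero_add] at h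
    rw [h, hbe, ← Complex.ofReal_mul, Complex.ofReal_re, Complex.ofReal_re]
  have hMe : (P C k ((τ : ℂ) • A + ((1 - τ : ℝ) : ℂ) • B)).re
      = (P C k B).re * ∏ i, ((1 - τ) + τ * r i) := by
    have h1 : (τ : ℂ) • A + ((1 - τ : ℝ) : ℂ) • B
        = (τ : ℂ) • (A + (((1 - τ) / τ : ℝ) : ℂ) • B) := by
      rw [smul_add, smul_smul, ← Complex.ofReal_mul, mul_div_cancel₀ _ hτ.ne']
    rw [h1, P_smul C hk, hs, hbe, ← Complex.ofReal_mul, ← Complex.ofReal_pow, ← Complex.ofReal_mul,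
      Complex.ofReal_re, Complex.ofReal_re, mul_left_comm]
    congr 1
    have : τ ^ k = ∏ _i : Fin k, τ := by simp
    rw [this, ← Finset.prod_mul_distrib]
    refine Finset.prod_congr rfl fun i _ => ?_
    field_simp
  rw [hAe, hMe, Real.mul_rpow hb1.le (Finset.prod_nonneg fun i _ => (hr i).le),
    Real.mul_rpow hb1.le (Finset.prod_nonneg fun i _ => by
      have := mul_pos hτ (hr i); linarith)]
  have h := geo k hk1 (by simp) r hr hτ (by linarith : 0 ≤ 1 - τ)
  have hb2 := Real.rpow_nonneg hb1.le (1 / (k : ℝ))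
  have := mul_le_mul_of_nonneg_left h hb2
  linarith

lemma cont_md {f : ℝ → Fin n → Mat n} (hf : Continuous f) :
    Continuous fun e => mixedDiscR (f e) := by
  unfold mixedDiscR mixedDisc
  refine Complex.continuous_re.comp (continuous_const.mul (continuous_finset_sum _ fun σ _ => ?_))
  refine Continuous.matrix_det ?_
  refine continuous_matrix fun i j => ?_
  simp only [Matrix.of_apply]
  exact ((continuous_apply (σ j)).comp hf).matrix_elem i j

end MDAux

end

/-- **General Brunn–Minkowski theorem for mixed discriminants**: for fixed positive
semi-definite `A⁽ᵏ⁺¹⁾, …, A⁽ⁿ⁾`, the map `A ↦ D(A[k], rest)^(1/k)` is concave on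
Hermitian positive semi-definite matrices. -/
theorem mixedDisc_rpow_concave {n : ℕ} (hn : 1 ≤ n) (k : ℕ) (hk1 : 1 ≤ k) (hkn : k ≤ n)
    (C : Fin n → Matrix (Fin n) (Fin n) ℂ) (hC : ∀ i : Fin n, k ≤ (i : ℕ) → (C i).PosSemidef)
    (A B : Matrix (Fin n) (Fin n) ℂ) (hA : A.PosSemidef) (hB : B.PosSemidef)
    (τ : ℝ) (hτ0 : 0 ≤ τ) (hτ1 : τ ≤ 1) :
    τ * mixedDiscR (fun i => if (i : ℕ) < k then A else C i) ^ (1 / (k : ℝ))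
        + (1 - τ) * mixedDiscR (fun i => if (i : ℕ) < k then B else C i) ^ (1 / (k : ℝ))
      ≤ mixedDiscR (fun i => if (i : ℕ) < k then (τ : ℂ) • A + ((1 - τ : ℝ) : ℂ) • B else C i)
          ^ (1 / (k : ℝ)) := by
  have hk0 : (0 : ℝ) ≤ 1 / (k : ℝ) := by positivity
  have hpd : ∀ M : Matrix (Fin n) (Fin n) ℂ, M.PosSemidef → ∀ e : ℝ, 0 < e →
      (M + (e : ℂ) • 1).PosDef := fun M hM e he =>
    Matrix.PosDef.posSemidef_add hM (MDAux.psmul Matrix.PosDef.one he)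
  have hcm : ∀ M : Matrix (Fin n) (Fin n) ℂ,
      Continuous fun e : ℝ => M + (e : ℂ) • (1 : Matrix (Fin n) (Fin n) ℂ) := fun M =>
    continuous_const.add (Complex.continuous_ofReal.smul continuous_const)
  have hcont : ∀ g : ℝ → Matrix (Fin n) (Fin n) ℂ, Continuous g →
      Continuous fun e : ℝ => mixedDiscR
        (fun i => if (i : ℕ) < k then g e else C i + (e : ℂ) • 1) ^ (1 / (k : ℝ)) := by
    intro g hg
    refine Continuous.rpow_const (MDAux.cont_md (continuous_pi fun i => ?_)) (fun _ => Or.inr hk0)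
    split_ifs
    · exact hg
    · exact hcm _
  have hL := (continuous_const (y := τ)).mul (hcont _ (hcm A)) |>.add
    ((continuous_const (y := 1 - τ)).mul (hcont _ (hcm B)))
  have hR := hcont (fun e => (τ : ℂ) • (A + (e : ℂ) • 1) + ((1 - τ : ℝ) : ℂ) • (B + (e : ℂ) • 1))
    (((hcm A).const_smul (τ : ℂ)).add ((hcm B).const_smul ((1 - τ : ℝ) : ℂ)))
  have hLt := (hL.tendsto 0).mono_left (nhdsWithin_le_nhds (s := Set.Ioi 0))
  have hRt := (hR.tendsto 0).mono_left (nhdsWithin_le_nhds (s := Set.Ioi 0))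
  have := le_of_tendsto_of_tendsto hLt hRt (by
    filter_upwards [self_mem_nhdsWithin] with e he
    have h := MDAux.main_pd (C := fun i => C i + (e : ℂ) • 1) hk1 hkn
      (fun i hi => hpd _ (hC i hi) e he) (hpd A hA e he) (hpd B hB e he) hτ0 hτ1
    simp only [MDAux.P, MDAux.md_apply] at h
    exact h)
  simpa using this
end

section
/- Let A be an n×n Hermitian positive definite matrix and C an n×n Hermitian matrix. Define T = ∫_0^∞ (A+τI)^{−1} C (A+τI)^{−1} dτ and R = 2∫_0^∞ (A+τI)^{−1} C (A+τI)^{−1} C (A+τI)^{−1} dτ. Then for every n×n Hermitian positive semi-definite matrix B: ∫_0^1 trace[T B^s T B^{1−s}] ds − trace[R B] ≤ 0. -/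
open Matrix MeasureTheory Finset ProbabilityTheory
open scoped Classical ComplexOrder

noncomputable section

/-- Matrix real power `A ^ s`, defined via the spectral decomposition for Hermitian matrices,
applying `t ↦ t ^ s` (real `rpow`, so `0 ^ 0 = 1`) to each eigenvalue (junk value `0`
otherwise). -/
def matRpow {n : ℕ} (A : Matrix (Fin n) (Fin n) ℂ) (s : ℝ) : Matrix (Fin n) (Fin n) ℂ :=
  if hA : A.IsHermitian then
    (hA.eigenvectorUnitary : Matrix (Fin n) (Fin n) ℂ) *
      Matrix.diagonal (fun i => ((hA.eigenvalues i ^ s : ℝ) : ℂ)) *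
      (star (hA.eigenvectorUnitary : Matrix (Fin n) (Fin n) ℂ))
  else 0

end


def HI {E : Type*} [NormedAddCommGroup E] [NormedSpace ℝ E] (f : ℝ → E) (v : E) : Prop :=
  IntegrableOn f (Set.Ioi (0:ℝ)) ∧ ∫ x in Set.Ioi (0:ℝ), f x = v

lemma HI.congr {E : Type*} [NormedAddCommGroup E] [NormedSpace ℝ E] {f g : ℝ → E} {v : E}
    (h : HI f v) (hfg : ∀ x, 0 < x → g x = f x) : HI g v := by
  refine ⟨h.1.congr_fun (fun x hx => (hfg x hx).symm) measurableSet_Ioi, ?_⟩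
  rw [← h.2]
  exact setIntegral_congr_fun measurableSet_Ioi (fun x hx => hfg x hx)

lemma HI.add {E : Type*} [NormedAddCommGroup E] [NormedSpace ℝ E] {f g : ℝ → E} {v w : E}
    (h : HI f v) (h' : HI g w) : HI (fun x => f x + g x) (v + w) :=
  ⟨h.1.add h'.1, by rw [integral_add h.1 h'.1, h.2, h'.2]⟩

lemma HI.sub {E : Type*} [NormedAddCommGroup E] [NormedSpace ℝ E] {f g : ℝ → E} {v w : E}
    (h : HI f v) (h' : HI g w) : HI (fun x => f x - g x) (v - w) :=
  ⟨h.1.sub h'.1, by rw [integral_sub h.1 h'.1, h.2, h'.2]⟩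

lemma HI.sum {E ι : Type*} [NormedAddCommGroup E] [NormedSpace ℝ E] [Fintype ι]
    {f : ι → ℝ → E} {v : ι → E}
    (h : ∀ i, HI (f i) (v i)) : HI (fun x => ∑ i, f i x) (∑ i, v i) :=
  ⟨integrable_finsetSum _ (fun i _ => (h i).1), by
    rw [integral_finsetSum _ (fun i _ => (h i).1)]
    exact Finset.sum_congr rfl (fun i _ => (h i).2)⟩

lemma HI.mulL {f : ℝ → ℂ} {v : ℂ} (h : HI f v) (c : ℂ) : HI (fun x => c * f x) (c * v) :=
  ⟨h.1.const_mul c, by rw [integral_const_mul, h.2]⟩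

lemma HI.mulLR {f : ℝ → ℝ} {v : ℝ} (h : HI f v) (c : ℝ) : HI (fun x => c * f x) (c * v) :=
  ⟨h.1.const_mul c, by rw [integral_const_mul, h.2]⟩

lemma HI.mulR {f : ℝ → ℂ} {v : ℂ} (h : HI f v) (c : ℂ) : HI (fun x => f x * c) (v * c) :=
  ⟨h.1.mul_const c, by rw [integral_mul_const, h.2]⟩

lemma HI.ofReal {f : ℝ → ℝ} {v : ℝ} (h : HI f v) : HI (fun x => (f x : ℂ)) (v : ℂ) :=
  ⟨Integrable.ofReal h.1, by rw [← h.2]; exact integral_ofReal⟩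

lemma HI.re {f : ℝ → ℂ} {v : ℂ} (h : HI f v) : HI (fun x => (f x).re) (v.re) :=
  ⟨Integrable.re h.1, by
    have := integral_re (μ := volume.restrict (Set.Ioi (0:ℝ))) (f := f) h.1
    rw [← h.2]; exact this⟩

lemma HI.mono {f g : ℝ → ℝ} {v w : ℝ} (h : HI f v) (h' : HI g w) (hfg : ∀ x, 0 < x → f x ≤ g x) :
    v ≤ w := by
  rw [← h.2, ← h'.2]
  exact setIntegral_mono_on h.1 h'.1 measurableSet_Ioi (fun x hx => hfg x hx)

lemma integrable_gen (p q r s K : ℝ) (hp : 0 < p) (hq : 0 < q) (hr : 0 < r) (hs : 0 < s)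
    (g : ℝ → ℝ) (hg : Measurable g) (hg0 : ∀ u, 0 < u → 0 ≤ g u) (hgK : ∀ u, 0 < u → g u ≤ K) :
    IntegrableOn (fun u => g u / ((p + q * u) * (r + s * u))) (Set.Ioi (0:ℝ)) := by
  have h1 : IntegrableOn (fun u : ℝ => (K / min (p * r) (q * s)) * (1 + u ^ 2)⁻¹) (Set.Ioi (0:ℝ)) :=
    (integrable_inv_one_add_sq.const_mul _).integrableOn
  refine Integrable.mono' h1 (Measurable.aestronglyMeasurable (by fun_prop)) ?_
  refine (ae_restrict_iff' measurableSet_Ioi).2 (Filter.Eventually.of_forall fun u hu => ?_)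
  have hu : 0 < u := hu
  have hm : 0 < min (p * r) (q * s) := lt_min (by positivity) (by positivity)
  have := hg0 u hu
  rw [Real.norm_of_nonneg (by positivity), ← div_eq_mul_inv, div_div]
  apply div_le_div₀ (this.trans (hgK u hu)) (hgK u hu) (by positivity)
  have e1 := min_le_left (p * r) (q * s)
  have e2 := min_le_right (p * r) (q * s)
  have : 0 < p * (s * u) := by positivity
  have : 0 < q * u * r := by positivity
  nlinarith [mul_le_mul_of_nonneg_right e2 (sq_nonneg u)]

noncomputable def N2 (a b : ℝ) : ℝ := ∫ τ in Set.Ioi (0:ℝ), 1 / ((a + τ) * (b + τ))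
noncomputable def N3 (a b c : ℝ) : ℝ := ∫ τ in Set.Ioi (0:ℝ), 1 / ((a + τ) * (b + τ) * (c + τ))

lemma HI_N2 {a b : ℝ} (ha : 0 < a) (hb : 0 < b) :
    HI (fun τ => 1 / ((a + τ) * (b + τ))) (N2 a b) := by
  refine ⟨?_, rfl⟩
  have := integrable_gen a 1 b 1 1 ha one_pos hb one_pos (fun _ => 1) measurable_const
    (fun _ _ => zero_le_one) (fun _ _ => le_rfl)
  simpa using this

lemma HI_N3 {a b c : ℝ} (ha : 0 < a) (hb : 0 < b) (hc : 0 < c) :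
    HI (fun τ => 1 / ((a + τ) * (b + τ) * (c + τ))) (N3 a b c) := by
  refine ⟨?_, rfl⟩
  have := integrable_gen a 1 b 1 (1 / c) ha one_pos hb one_pos (fun u => 1 / (c + u)) (by fun_prop)
    (fun u hu => by positivity) (fun u hu => by
      apply one_div_le_one_div_of_le hc; linarith)
  refine this.congr_fun (fun u hu => ?_) measurableSet_Ioi
  simp only [one_mul]
  rw [div_div, mul_comm]

lemma N2_comm (a b : ℝ) : N2 a b = N2 b a := by
  unfold N2; congr; ext; rw [mul_comm]

lemma HI_scale2 {a b : ℝ} (ha : 0 < a) (hb : 0 < b) :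
    HI (fun u => 1 / ((a + u * b) * (1 + u))) (N2 a b) := by
  constructor
  · have := integrable_gen a b 1 1 1 ha hb one_pos one_pos (fun _ => 1) measurable_const
      (fun _ _ => zero_le_one) (fun _ _ => le_rfl)
    refine this.congr_fun (fun u hu => ?_) measurableSet_Ioi
    simp only [one_mul]; rw [mul_comm b u]
  · have := integral_comp_mul_left_Ioi (fun τ => 1 / ((a + τ) * (b + τ))) 0 hb
    rw [mul_zero] at this
    have h2 : N2 a b = b * ∫ u in Set.Ioi (0:ℝ), 1 / ((a + b * u) * (b + b * u)) := by
      rw [this, smul_eq_mul, ← mul_assoc, mul_inv_cancel₀ hb.ne', one_mul]; rfl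
    rw [h2, ← integral_const_mul]
    refine setIntegral_congr_fun measurableSet_Ioi (fun u hu => ?_)
    have hu : 0 < u := hu
    have : 0 < a + b * u := by positivity
    have : 0 < a + u * b := by positivity
    field_simp

lemma HI_scale3 {a b c : ℝ} (ha : 0 < a) (hb : 0 < b) (hc : 0 < c) :
    HI (fun u => 1 / ((a + u * b) * (c + u * b) * (1 + u))) (N3 a b c) := by
  constructor
  · have := integrable_gen a b c b 1 ha hb hc hb (fun u => 1 / (1 + u)) (by fun_prop)
      (fun u hu => by positivity) (fun u hu => by rw [div_le_one (by positivity)]; linarith)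
    refine this.congr_fun (fun u hu => ?_) measurableSet_Ioi
    have hu : 0 < u := hu
    simp only
    rw [div_div]; congr 1; ring
  · have := integral_comp_mul_left_Ioi (fun τ => 1 / ((a + τ) * (b + τ) * (c + τ))) 0 hb
    rw [mul_zero] at this
    have h2 : N3 a b c = b * ∫ u in Set.Ioi (0:ℝ),
        1 / ((a + b * u) * (b + b * u) * (c + b * u)) := by
      rw [this, smul_eq_mul, ← mul_assoc, mul_inv_cancel₀ hb.ne', one_mul]; rfl
    rw [h2, ← integral_const_mul]
    refine setIntegral_congr_fun measurableSet_Ioi (fun u hu => ?_)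
    have hu : 0 < u := hu
    have : 0 < a + b * u := by positivity
    have : 0 < a + u * b := by positivity
    have : 0 < c + b * u := by positivity
    have : 0 < c + u * b := by positivity
    field_simp

lemma HI_inv3 {a b c : ℝ} (ha : 0 < a) (hb : 0 < b) (hc : 0 < c) :
    HI (fun u => u / ((b + u * a) * (b + u * c) * (1 + u))) (N3 a b c) := by
  constructor
  · have := integrable_gen b a b c 1 hb ha hb hc (fun u => u / (1 + u)) (by fun_prop)
      (fun u hu => by positivity) (fun u hu => by rw [div_le_one (by positivity)]; linarith)
    refine this.congr_fun (fun u hu => ?_) measurableSet_Ioi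
    have hu : 0 < u := hu
    simp only
    rw [div_div]; congr 1; ring
  · rw [← (HI_scale3 ha hb hc).2, ← integral_comp_rpow_Ioi (fun u => 1 / ((a + u * b) * (c + u * b) * (1 + u))) (p := -1) (by norm_num)]
    refine setIntegral_congr_fun measurableSet_Ioi (fun u hu => ?_)
    have hu : 0 < u := hu
    have e : (-1 : ℝ) - 1 = -(2:ℕ) := by norm_num
    simp only [e, Real.rpow_neg hu.le, Real.rpow_natCast, Real.rpow_one, smul_eq_mul, abs_neg, abs_one]
    have : 0 < b + u * a := by positivity
    have : 0 < b + u * c := by positivity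
    have : 0 < a + u⁻¹ * b := by positivity
    have : 0 < c + u⁻¹ * b := by positivity
    have e1 : a + u⁻¹ * b = (b + u * a) / u := by field_simp; ring
    have e2 : c + u⁻¹ * b = (b + u * c) / u := by field_simp; ring
    have e3 : 1 + u⁻¹ = (1 + u) / u := by field_simp; ring
    rw [e1, e2, e3]
    field_simp

lemma N2_eq {a b : ℝ} (ha : 0 < a) (hb : 0 < b) (hab : a ≠ b) :
    N2 a b = (Real.log a - Real.log b) / (a - b) := by
  have hab' : a - b ≠ 0 := sub_ne_zero.2 hab
  have h := integral_Ioi_of_hasDerivAt_of_tendsto' (a := 0) (m := 0)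
    (f := fun τ => (Real.log (b + τ) - Real.log (a + τ)) / (a - b))
    (f' := fun τ => 1 / ((a + τ) * (b + τ))) ?_ (HI_N2 ha hb).1 ?_
  · unfold N2; rw [h]; simp; ring
  · intro x hx
    have hx : 0 ≤ x := hx
    have h1 : HasDerivAt (fun τ => b + τ) 1 x := (hasDerivAt_id x).const_add b
    have h2 : HasDerivAt (fun τ => a + τ) 1 x := (hasDerivAt_id x).const_add a
    have hbx : b + x ≠ 0 := by positivity
    have hax : a + x ≠ 0 := by positivity
    refine (((h1.log hbx).fun_sub (h2.log hax)).div_const (a - b)).congr_deriv ?_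
    field_simp; ring
  · have h1 : Filter.Tendsto (fun τ : ℝ => 1 + (b - a) * (a + τ)⁻¹) Filter.atTop (nhds (1 + (b - a) * 0)) :=
      ((tendsto_inv_atTop_zero.comp (Filter.tendsto_atTop_add_const_left _ a Filter.tendsto_id)).const_mul _).const_add _
    have h2 := (h1.log (by simp)).div_const (a - b)
    simp only [mul_zero, add_zero, Real.log_one, zero_div] at h2
    refine h2.congr' ?_
    filter_upwards [Filter.eventually_gt_atTop 0] with x hx
    have hbx : b + x ≠ 0 := by positivity
    have hax : a + x ≠ 0 := by positivity
    rw [← Real.log_div hbx hax]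
    congr 2; field_simp; ring

lemma N2_self {a : ℝ} (ha : 0 < a) : N2 a a = 1 / a := by
  have h := integral_Ioi_of_hasDerivAt_of_tendsto' (a := 0) (m := 0)
    (f := fun τ => -(a + τ)⁻¹)
    (f' := fun τ => 1 / ((a + τ) * (a + τ))) ?_ (HI_N2 ha ha).1 ?_
  · unfold N2; rw [h]; simp
  · intro x hx
    have hx : 0 ≤ x := hx
    have h2 : HasDerivAt (fun τ => a + τ) 1 x := (hasDerivAt_id x).const_add a
    have hax : a + x ≠ 0 := by positivity
    convert (h2.fun_inv hax).fun_neg using 1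
    field_simp
  · have := (tendsto_inv_atTop_zero.comp (Filter.tendsto_atTop_add_const_left _ a Filter.tendsto_id)).neg
    simpa using this

noncomputable def LM (a b : ℝ) : ℝ := ∫ s in (0:ℝ)..1, a ^ s * b ^ (1 - s)

lemma LM_mul_N2 {a b : ℝ} (ha : 0 < a) (hb : 0 < b) : LM a b * N2 a b = 1 := by
  by_cases hab : a = b
  · subst hab
    have : LM a a = a := by
      unfold LM
      rw [intervalIntegral.integral_congr (g := fun _ => a)]
      · simp
      · intro s _
        simp only
        rw [← Real.rpow_add ha]; simp
    rw [this, N2_self ha]; field_simp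
  · have hl : Real.log a - Real.log b ≠ 0 := by
      intro h; exact hab (Real.log_injOn_pos ha hb (sub_eq_zero.1 h))
    have hab' : a - b ≠ 0 := sub_ne_zero.2 hab
    have : LM a b = (a - b) / (Real.log a - Real.log b) := by
      unfold LM
      have e : ∀ s : ℝ, a ^ s * b ^ (1 - s) =
          Real.exp (s * (Real.log a - Real.log b) + Real.log b) := by
        intro s
        rw [Real.rpow_def_of_pos ha, Real.rpow_def_of_pos hb, ← Real.exp_add]
        congr 1; ring
      simp_rw [e]
      rw [intervalIntegral.integral_eq_sub_of_hasDerivAt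
        (f := fun s => Real.exp (s * (Real.log a - Real.log b) + Real.log b) / (Real.log a - Real.log b))]
      · simp [Real.exp_log ha, Real.exp_log hb]; ring
      · intro x _
        have := ((((hasDerivAt_id x).mul_const (Real.log a - Real.log b)).add_const (Real.log b)).exp).div_const (Real.log a - Real.log b)
        refine this.congr_deriv ?_
        simp only [id]
        field_simp
      · apply Continuous.intervalIntegrable; fun_prop
    rw [this, N2_eq ha hb hab]; field_simp

lemma LM_zero {a b : ℝ} (h : a = 0 ∨ b = 0) : LM a b = 0 := by
  unfold LM
  rw [intervalIntegral.integral_of_le zero_le_one, integral_Ioc_eq_integral_Ioo]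
  rw [setIntegral_congr_fun (g := fun _ => 0) measurableSet_Ioo]
  · simp
  · intro s hs
    rcases h with h | h
    · simp [h, Real.zero_rpow hs.1.ne']
    · simp [h, Real.zero_rpow (sub_pos.2 hs.2).ne']

lemma LM_integrable {a b : ℝ} (ha : 0 ≤ a) (hb : 0 ≤ b) :
    IntervalIntegrable (fun s => a ^ s * b ^ (1 - s)) volume 0 1 := by
  rw [intervalIntegrable_iff_integrableOn_Ioo_of_le zero_le_one]
  rcases ha.eq_or_lt with h | h
  · refine (integrableOn_zero (ε' := ℝ)).congr_fun (fun s hs => ?_) measurableSet_Ioo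
    simp [← h, Real.zero_rpow hs.1.ne']
  rcases hb.eq_or_lt with h' | h'
  · refine (integrableOn_zero (ε' := ℝ)).congr_fun (fun s hs => ?_) measurableSet_Ioo
    simp [← h', Real.zero_rpow (sub_pos.2 hs.2).ne']
  rw [← intervalIntegrable_iff_integrableOn_Ioo_of_le zero_le_one]
  apply Continuous.intervalIntegrable
  have := h.ne'; have := h'.ne'
  fun_prop (disch := assumption)

def MHI {n : ℕ} (F : ℝ → Matrix (Fin n) (Fin n) ℂ) (M : Matrix (Fin n) (Fin n) ℂ) : Prop :=
  ∀ i j, HI (fun x => F x i j) (M i j)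

lemma MHI.mulL {n : ℕ} {F : ℝ → Matrix (Fin n) (Fin n) ℂ} {M : Matrix (Fin n) (Fin n) ℂ}
    (h : MHI F M) (W : Matrix (Fin n) (Fin n) ℂ) : MHI (fun x => W * F x) (W * M) := by
  intro i j
  simp only [Matrix.mul_apply]
  exact HI.sum (fun k => (h k j).mulL _)

lemma MHI.mulR {n : ℕ} {F : ℝ → Matrix (Fin n) (Fin n) ℂ} {M : Matrix (Fin n) (Fin n) ℂ}
    (h : MHI F M) (W : Matrix (Fin n) (Fin n) ℂ) : MHI (fun x => F x * W) (M * W) := by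
  intro i j
  simp only [Matrix.mul_apply]
  exact HI.sum (fun k => (h i k).mulR _)

lemma MHI.congr {n : ℕ} {F G : ℝ → Matrix (Fin n) (Fin n) ℂ} {M : Matrix (Fin n) (Fin n) ℂ}
    (h : MHI F M) (hFG : ∀ x, 0 < x → G x = F x) : MHI G M :=
  fun i j => (h i j).congr (fun x hx => by rw [hFG x hx])

noncomputable def Yt {n : ℕ} (a : Fin n → ℝ) (c : Matrix (Fin n) (Fin n) ℂ) (u : ℝ) :
    Matrix (Fin n) (Fin n) ℂ :=
  Matrix.of fun i j => c i j / ((a i + u * a j : ℝ) : ℂ)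

noncomputable def Tt {n : ℕ} (a : Fin n → ℝ) (c : Matrix (Fin n) (Fin n) ℂ) :
    Matrix (Fin n) (Fin n) ℂ :=
  Matrix.of fun i j => c i j * (N2 (a i) (a j) : ℂ)

noncomputable def Rt {n : ℕ} (a : Fin n → ℝ) (c : Matrix (Fin n) (Fin n) ℂ) :
    Matrix (Fin n) (Fin n) ℂ :=
  Matrix.of fun i k => ∑ j, c i j * c j k * (N3 (a i) (a j) (a k) : ℂ)

lemma MHI_Y {n : ℕ} {a : Fin n → ℝ} (ha : ∀ i, 0 < a i) (c : Matrix (Fin n) (Fin n) ℂ) :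
    MHI (fun u => ((1 / (1 + u) : ℝ) : ℂ) • Yt a c u) (Tt a c) := by
  intro i j
  refine ((HI_scale2 (ha i) (ha j)).ofReal.mulL (c i j)).congr (fun x hx => ?_)
  simp only [Yt, Matrix.smul_apply, Matrix.of_apply, smul_eq_mul]
  push_cast
  rw [one_div_mul_eq_div, div_div, mul_one_div]

lemma MHI_YY {n : ℕ} {a : Fin n → ℝ} (ha : ∀ i, 0 < a i) {c : Matrix (Fin n) (Fin n) ℂ}
    (hc : c.IsHermitian) :
    MHI (fun u => ((1 / (1 + u) : ℝ) : ℂ) • (Yt a c u * (Yt a c u)ᴴ)) (Rt a c) := by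
  intro i k
  refine (HI.sum (fun j => (HI_scale3 (ha i) (ha j) (ha k)).ofReal.mulL (c i j * c j k))).congr
    (fun x hx => ?_)
  simp only [Yt, Matrix.smul_apply, Matrix.mul_apply, Matrix.conjTranspose_apply, Matrix.of_apply,
    smul_eq_mul, Finset.mul_sum]
  refine Finset.sum_congr rfl (fun j _ => ?_)
  rw [← hc.apply j k, Complex.star_def, map_div₀, Complex.conj_ofReal]
  push_cast
  simp only [div_eq_mul_inv, mul_inv, one_mul]
  ring

lemma MHI_YY2 {n : ℕ} {a : Fin n → ℝ} (ha : ∀ i, 0 < a i) {c : Matrix (Fin n) (Fin n) ℂ}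
    (hc : c.IsHermitian) :
    MHI (fun u => ((u / (1 + u) : ℝ) : ℂ) • ((Yt a c u)ᴴ * Yt a c u)) (Rt a c) := by
  intro i k
  refine (HI.sum (fun j => (HI_inv3 (ha i) (ha j) (ha k)).ofReal.mulL (c i j * c j k))).congr
    (fun x hx => ?_)
  simp only [Yt, Matrix.smul_apply, Matrix.mul_apply, Matrix.conjTranspose_apply, Matrix.of_apply,
    smul_eq_mul, Finset.mul_sum]
  refine Finset.sum_congr rfl (fun j _ => ?_)
  rw [← hc.apply i j, Complex.star_def, map_div₀, Complex.conj_ofReal]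
  push_cast
  simp only [div_eq_mul_inv, mul_inv]
  ring

lemma ptwise (t y : ℂ) (m x : ℝ) (hx : 0 < x) :
    2 * m * (star t * y).re - x * Complex.normSq y ≤ Complex.normSq t * (m ^ 2 * (1 / x)) := by
  have : Complex.normSq t * (m ^ 2 * (1 / x)) - (2 * m * (star t * y).re - x * Complex.normSq y)
      = Complex.normSq (x * y - m * t) / x := by
    simp [Complex.normSq_apply]
    field_simp; ring
  have h2 : 0 ≤ Complex.normSq (x * y - m * t) / x := div_nonneg (Complex.normSq_nonneg _) hx.le
  linarith

lemma mul_conj_diag {n : ℕ} (y : Matrix (Fin n) (Fin n) ℂ) (k : Fin n) :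
    (y * yᴴ) k k = ((∑ l, Complex.normSq (y k l) : ℝ) : ℂ) := by
  simp [Matrix.mul_apply, Complex.mul_conj]

lemma conj_mul_diag {n : ℕ} (y : Matrix (Fin n) (Fin n) ℂ) (k : Fin n) :
    (yᴴ * y) k k = ((∑ l, Complex.normSq (y l k) : ℝ) : ℂ) := by
  simp [Matrix.mul_apply, Complex.normSq_eq_conj_mul_self]

lemma core {n : ℕ} {a b : Fin n → ℝ} (ha : ∀ i, 0 < a i) (hb : ∀ i, 0 ≤ b i)
    {c : Matrix (Fin n) (Fin n) ℂ} (hc : c.IsHermitian) (W : Matrix (Fin n) (Fin n) ℂ)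
    (hW : Wᴴ * W = 1) :
    ∑ k, ∑ l, Complex.normSq ((W * Tt a c * Wᴴ) k l) * LM (b k) (b l) ≤
      2 * ∑ k, ((W * Rt a c * Wᴴ) k k).re * b k := by
  set t := W * Tt a c * Wᴴ with ht
  have h1 : HI (fun u => ∑ k, ∑ l, (2 * LM (b k) (b l)) *
      (star (t k l) * (W * (((1 / (1 + u) : ℝ) : ℂ) • Yt a c u) * Wᴴ) k l).re)
      (∑ k, ∑ l, (2 * LM (b k) (b l)) * (star (t k l) * t k l).re) :=
    HI.sum fun k => HI.sum fun l =>
      (((((MHI_Y ha c).mulL W).mulR Wᴴ) k l).mulL (star (t k l))).re.mulLR _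
  have h2 : HI (fun u => ∑ k, b k *
      ((W * (((1 / (1 + u) : ℝ) : ℂ) • (Yt a c u * (Yt a c u)ᴴ)) * Wᴴ) k k).re)
      (∑ k, b k * ((W * Rt a c * Wᴴ) k k).re) :=
    HI.sum fun k => ((((MHI_YY ha hc).mulL W).mulR Wᴴ) k k).re.mulLR _
  have h3 : HI (fun u => ∑ k, b k *
      ((W * (((u / (1 + u) : ℝ) : ℂ) • ((Yt a c u)ᴴ * Yt a c u)) * Wᴴ) k k).re)
      (∑ k, b k * ((W * Rt a c * Wᴴ) k k).re) :=
    HI.sum fun k => ((((MHI_YY2 ha hc).mulL W).mulR Wᴴ) k k).re.mulLR _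
  have h4 : HI (fun u => ∑ k, ∑ l, Complex.normSq (t k l) *
      (LM (b k) (b l) ^ 2 * (if 0 < b k ∧ 0 < b l then 1 / ((b k + u * b l) * (1 + u)) else 0)))
      (∑ k, ∑ l, Complex.normSq (t k l) * LM (b k) (b l)) := by
    refine HI.sum fun k => HI.sum fun l => ?_
    by_cases h : 0 < b k ∧ 0 < b l
    · simp only [h, and_self, if_true]
      have e : LM (b k) (b l) = LM (b k) (b l) ^ 2 * N2 (b k) (b l) := by
        rw [sq, mul_assoc, LM_mul_N2 h.1 h.2, mul_one]
      have := ((HI_scale2 h.1 h.2).mulLR (LM (b k) (b l) ^ 2)).mulLR (Complex.normSq (t k l))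
      rwa [← e] at this
    · have : LM (b k) (b l) = 0 := by
        apply LM_zero
        by_contra hcon
        push Not at hcon
        exact h ⟨lt_of_le_of_ne (hb k) (Ne.symm hcon.1), lt_of_le_of_ne (hb l) (Ne.symm hcon.2)⟩
      simp only [this]
      refine ⟨by simp, by simp⟩
  have key := (h1.sub (h2.add h3)).mono h4 ?_
  · have e : ∑ k, ∑ l, (2 * LM (b k) (b l)) * (star (t k l) * t k l).re
        = 2 * ∑ k, ∑ l, Complex.normSq (t k l) * LM (b k) (b l) := by
      simp only [Finset.mul_sum]
      refine Finset.sum_congr rfl fun k _ => Finset.sum_congr rfl fun l _ => ?_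
      rw [Complex.star_def, ← Complex.normSq_eq_conj_mul_self, Complex.ofReal_re]; ring
    rw [e] at key
    have e2 : ∑ k, b k * ((W * Rt a c * Wᴴ) k k).re = ∑ k, ((W * Rt a c * Wᴴ) k k).re * b k :=
      Finset.sum_congr rfl fun k _ => mul_comm _ _
    rw [e2] at key
    linarith
  · intro u hu
    set y := W * Yt a c u * Wᴴ with hy
    have f1 : W * (((1 / (1 + u) : ℝ) : ℂ) • Yt a c u) * Wᴴ = ((1 / (1 + u) : ℝ) : ℂ) • y := by
      simp [hy]
    have f2 : W * (((1 / (1 + u) : ℝ) : ℂ) • (Yt a c u * (Yt a c u)ᴴ)) * Wᴴ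
        = ((1 / (1 + u) : ℝ) : ℂ) • (y * yᴴ) := by
      rw [hy, Matrix.mul_smul, Matrix.smul_mul]
      congr 1
      simp only [Matrix.conjTranspose_mul, Matrix.conjTranspose_conjTranspose]
      calc _ = W * Yt a c u * 1 * ((Yt a c u)ᴴ * Wᴴ) := by simp only [Matrix.mul_assoc, Matrix.one_mul]
        _ = _ := by rw [← hW]; simp only [Matrix.mul_assoc]
    have f3 : W * (((u / (1 + u) : ℝ) : ℂ) • ((Yt a c u)ᴴ * Yt a c u)) * Wᴴ
        = ((u / (1 + u) : ℝ) : ℂ) • (yᴴ * y) := by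
      rw [hy, Matrix.mul_smul, Matrix.smul_mul]
      congr 1
      simp only [Matrix.conjTranspose_mul, Matrix.conjTranspose_conjTranspose]
      calc _ = W * (Yt a c u)ᴴ * 1 * (Yt a c u * Wᴴ) := by simp only [Matrix.mul_assoc, Matrix.one_mul]
        _ = _ := by rw [← hW]; simp only [Matrix.mul_assoc]
    simp only [f1, f2, f3, Matrix.smul_apply, mul_conj_diag, conj_mul_diag, smul_eq_mul]
    simp only [← Complex.ofReal_mul, Complex.ofReal_re, Finset.mul_sum]
    rw [Finset.sum_comm (f := fun i j => b i * (u / (1 + u) * Complex.normSq (y j i)))]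
    simp only [← Finset.sum_add_distrib, ← Finset.sum_sub_distrib]
    refine Finset.sum_le_sum fun k _ => Finset.sum_le_sum fun l _ => ?_
    have e0 : (star (t k l) * (((1 / (1 + u) : ℝ) : ℂ) * y k l)).re
        = 1 / (1 + u) * (star (t k l) * y k l).re := by
      rw [mul_left_comm, Complex.re_ofReal_mul]
    rw [e0]
    have hw : 0 < 1 / (1 + u) := by positivity
    split_ifs with h
    · have := mul_le_mul_of_nonneg_left (ptwise (t k l) (y k l) (LM (b k) (b l)) (b k + u * b l)
        (add_pos h.1 (mul_pos hu h.2))) hw.le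
      have h' : 0 < b k + u * b l := add_pos h.1 (mul_pos hu h.2)
      convert this using 1
      · ring
      · field_simp
    · have : LM (b k) (b l) = 0 := by
        apply LM_zero
        by_contra hcon
        push Not at hcon
        exact h ⟨lt_of_le_of_ne (hb k) (Ne.symm hcon.1), lt_of_le_of_ne (hb l) (Ne.symm hcon.2)⟩
      rw [this]
      have q1 := hb k
      have q2 := hb l
      have q3 := Complex.normSq_nonneg (y k l)
      have : 0 ≤ b k * (1 / (1 + u) * Complex.normSq (y k l))
        + b l * (u / (1 + u) * Complex.normSq (y k l)) := by positivity
      linarith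

lemma inv_spec {n : ℕ} {A : Matrix (Fin n) (Fin n) ℂ} {U : Matrix (Fin n) (Fin n) ℂ}
    {a : Fin n → ℝ} (ha : ∀ i, 0 < a i) (hU : Uᴴ * U = 1)
    (hA : A = U * Matrix.diagonal (fun i => (a i : ℂ)) * Uᴴ) {τ : ℝ} (hτ : 0 < τ) :
    (A + (τ : ℂ) • 1)⁻¹ = U * Matrix.diagonal (fun i => ((1 / (a i + τ) : ℝ) : ℂ)) * Uᴴ := by
  have hU' : U * Uᴴ = 1 := mul_eq_one_comm.1 hU
  have e : A + (τ : ℂ) • 1 = U * Matrix.diagonal (fun i => ((a i + τ : ℝ) : ℂ)) * Uᴴ := by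
    have : Matrix.diagonal (fun i => ((a i + τ : ℝ) : ℂ))
        = Matrix.diagonal (fun i => (a i : ℂ)) + (τ : ℂ) • (1 : Matrix (Fin n) (Fin n) ℂ) := by
      rw [Matrix.smul_one_eq_diagonal, Matrix.diagonal_add]; simp
    rw [this, Matrix.mul_add, Matrix.add_mul, ← hA, Matrix.mul_smul, Matrix.smul_mul, Matrix.mul_one,
      hU']
  apply Matrix.inv_eq_right_inv
  rw [e]
  have e2 : Matrix.diagonal (fun i => ((a i + τ : ℝ) : ℂ)) *
      Matrix.diagonal (fun i => ((1 / (a i + τ) : ℝ) : ℂ)) = 1 := by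
    rw [Matrix.diagonal_mul_diagonal, ← Matrix.diagonal_one]
    congr 1; ext i
    have := ha i
    rw [← Complex.ofReal_mul, mul_one_div_cancel (by positivity)]; simp
  calc _ = U * Matrix.diagonal (fun i => ((a i + τ : ℝ) : ℂ)) * (Uᴴ * U) *
      Matrix.diagonal (fun i => ((1 / (a i + τ) : ℝ) : ℂ)) * Uᴴ := by
        simp only [Matrix.mul_assoc]
    _ = U * (Matrix.diagonal (fun i => ((a i + τ : ℝ) : ℂ)) *
      Matrix.diagonal (fun i => ((1 / (a i + τ) : ℝ) : ℂ))) * Uᴴ := by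
        rw [hU, Matrix.mul_one]; simp only [Matrix.mul_assoc]
    _ = 1 := by rw [e2, Matrix.mul_one, hU']

lemma MHI_T {n : ℕ} {a : Fin n → ℝ} (ha : ∀ i, 0 < a i) (c : Matrix (Fin n) (Fin n) ℂ) :
    MHI (fun τ => Matrix.diagonal (fun i => ((1 / (a i + τ) : ℝ) : ℂ)) * c *
      Matrix.diagonal (fun i => ((1 / (a i + τ) : ℝ) : ℂ))) (Tt a c) := by
  intro i j
  refine ((HI_N2 (ha i) (ha j)).ofReal.mulL (c i j)).congr (fun x hx => ?_)
  simp only [Matrix.mul_diagonal, Matrix.diagonal_mul]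
  push_cast
  simp only [div_eq_mul_inv, mul_inv, one_mul]
  ring

lemma MHI_R {n : ℕ} {a : Fin n → ℝ} (ha : ∀ i, 0 < a i) (c : Matrix (Fin n) (Fin n) ℂ) :
    MHI (fun τ => Matrix.diagonal (fun i => ((1 / (a i + τ) : ℝ) : ℂ)) * c *
      Matrix.diagonal (fun i => ((1 / (a i + τ) : ℝ) : ℂ)) * c *
      Matrix.diagonal (fun i => ((1 / (a i + τ) : ℝ) : ℂ))) (Rt a c) := by
  intro i k
  refine (HI.sum (fun j => (HI_N3 (ha i) (ha j) (ha k)).ofReal.mulL (c i j * c j k))).congr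
    (fun x hx => ?_)
  simp only [Matrix.mul_diagonal, Matrix.diagonal_mul]
  rw [Matrix.mul_apply]
  simp only [Matrix.mul_diagonal, Matrix.diagonal_mul, Finset.sum_mul]
  refine Finset.sum_congr rfl (fun j _ => ?_)
  push_cast
  simp only [div_eq_mul_inv, mul_inv, one_mul]
  ring

lemma spec {n : ℕ} {A : Matrix (Fin n) (Fin n) ℂ} (hA : A.IsHermitian) :
    A = (hA.eigenvectorUnitary : Matrix (Fin n) (Fin n) ℂ) *
      Matrix.diagonal (fun i => (hA.eigenvalues i : ℂ)) *
      (hA.eigenvectorUnitary : Matrix (Fin n) (Fin n) ℂ)ᴴ := by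
  have := hA.spectral_theorem
  rw [Unitary.conjStarAlgAut_apply] at this
  exact this

theorem lieb_trace_inequality {n : ℕ}
    (A C : Matrix (Fin n) (Fin n) ℂ) (hA : A.PosDef) (hC : C.IsHermitian)
    (B : Matrix (Fin n) (Fin n) ℂ) (hB : B.PosSemidef)
    (T R : Matrix (Fin n) (Fin n) ℂ)
    (hT : T = Matrix.of fun a b =>
      ∫ τ in Set.Ioi (0 : ℝ),
        ((A + (τ : ℂ) • 1)⁻¹ * C * (A + (τ : ℂ) • 1)⁻¹) a b)
    (hR : R = Matrix.of fun a b =>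
      2 * ∫ τ in Set.Ioi (0 : ℝ),
        ((A + (τ : ℂ) • 1)⁻¹ * C * (A + (τ : ℂ) • 1)⁻¹ * C * (A + (τ : ℂ) • 1)⁻¹) a b) :
    (∫ s in (0 : ℝ)..1, (Matrix.trace (T * matRpow B s * T * matRpow B (1 - s))).re)
        - (Matrix.trace (R * B)).re ≤ 0 := by
  have hAs := spec hA.isHermitian
  have hBs := spec hB.isHermitian
  have ha := hA.eigenvalues_pos
  have hb := hB.eigenvalues_nonneg
  have hU : (hA.isHermitian.eigenvectorUnitary : Matrix (Fin n) (Fin n) ℂ)ᴴ *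
    (hA.isHermitian.eigenvectorUnitary : Matrix (Fin n) (Fin n) ℂ) = 1 :=
    Unitary.coe_star_mul_self _
  have hV : (hB.isHermitian.eigenvectorUnitary : Matrix (Fin n) (Fin n) ℂ)ᴴ *
    (hB.isHermitian.eigenvectorUnitary : Matrix (Fin n) (Fin n) ℂ) = 1 :=
    Unitary.coe_star_mul_self _
  have hpow : ∀ s, matRpow B s = (hB.isHermitian.eigenvectorUnitary : Matrix (Fin n) (Fin n) ℂ) *
      Matrix.diagonal (fun i => ((hB.isHermitian.eigenvalues i ^ s : ℝ) : ℂ)) *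
      (hB.isHermitian.eigenvectorUnitary : Matrix (Fin n) (Fin n) ℂ)ᴴ := fun s => by
    rw [matRpow, dif_pos hB.isHermitian]; rfl
  generalize (hA.isHermitian.eigenvectorUnitary : Matrix (Fin n) (Fin n) ℂ) = U at *
  generalize (hB.isHermitian.eigenvectorUnitary : Matrix (Fin n) (Fin n) ℂ) = V at *
  generalize hA.isHermitian.eigenvalues = a at *
  generalize hB.isHermitian.eigenvalues = b at *
  have hU' : U * Uᴴ = 1 := mul_eq_one_comm.1 hU
  have hV' : V * Vᴴ = 1 := mul_eq_one_comm.1 hV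
  set c := Uᴴ * C * U with hcdef
  have hc : c.IsHermitian := by
    rw [hcdef]
    exact Matrix.isHermitian_conjTranspose_mul_mul U hC
  have hTU : T = U * Tt a c * Uᴴ := by
    have h : MHI (fun τ : ℝ => (A + (τ : ℂ) • 1)⁻¹ * C * (A + (τ : ℂ) • 1)⁻¹) (U * Tt a c * Uᴴ) := by
      refine (((MHI_T ha c).mulL U).mulR Uᴴ).congr (fun τ hτ => ?_)
      rw [inv_spec ha hU hAs hτ, hcdef]
      simp only [Matrix.mul_assoc]
    rw [hT]; ext i j
    exact (h i j).2
  have hRU : R = (2:ℂ) • (U * Rt a c * Uᴴ) := by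
    have h : MHI (fun τ : ℝ => (A + (τ : ℂ) • 1)⁻¹ * C * (A + (τ : ℂ) • 1)⁻¹ * C *
        (A + (τ : ℂ) • 1)⁻¹) (U * Rt a c * Uᴴ) := by
      refine (((MHI_R ha c).mulL U).mulR Uᴴ).congr (fun τ hτ => ?_)
      rw [inv_spec ha hU hAs hτ, hcdef]
      simp only [Matrix.mul_assoc]
    rw [hR]; ext i j
    simp only [Matrix.of_apply, Matrix.smul_apply, smul_eq_mul]
    rw [(h i j).2]
  set W := Vᴴ * U with hWdef
  have hWH : Wᴴ = Uᴴ * V := by simp [hWdef]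
  have hW : Wᴴ * W = 1 := by
    rw [hWH, hWdef]
    calc _ = Uᴴ * (V * Vᴴ) * U := by simp only [Matrix.mul_assoc]
      _ = 1 := by rw [hV', Matrix.mul_one, hU]
  have hTh : (Tt a c).IsHermitian := by
    ext i j
    simp only [Tt, Matrix.conjTranspose_apply, Matrix.of_apply, star_mul']
    rw [hc.apply i j, N2_comm (a j), Complex.star_def, Complex.conj_ofReal]
  have main := core ha hb hc W hW
  set t := W * Tt a c * Wᴴ with htdef
  have hth : t.IsHermitian := Matrix.isHermitian_mul_mul_conjTranspose W hTh
  have htV : t = Vᴴ * T * V := by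
    rw [htdef, hWH, hWdef, hTU]; simp only [Matrix.mul_assoc]
  have htr : ∀ s : ℝ, (Matrix.trace (T * matRpow B s * T * matRpow B (1 - s))).re
      = ∑ k, ∑ l, Complex.normSq (t k l) * (b k ^ (1 - s) * b l ^ s) := by
    intro s
    have : Matrix.trace (T * matRpow B s * T * matRpow B (1 - s)) =
        Matrix.trace (t * Matrix.diagonal (fun i => ((b i ^ s : ℝ) : ℂ)) * t *
          Matrix.diagonal (fun i => ((b i ^ (1 - s) : ℝ) : ℂ))) := by
      rw [hpow, hpow, htV]
      rw [← Matrix.mul_assoc, Matrix.trace_mul_comm]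
      simp only [Matrix.mul_assoc]
    rw [this, Matrix.trace, Complex.re_sum]
    refine Finset.sum_congr rfl fun k _ => ?_
    simp only [Matrix.diag_apply, Matrix.mul_diagonal]
    rw [Matrix.mul_apply, Finset.sum_mul, Complex.re_sum]
    refine Finset.sum_congr rfl fun l _ => ?_
    rw [Matrix.mul_diagonal, ← hth.apply l k, Complex.star_def]
    rw [show t k l * ((b l ^ s : ℝ) : ℂ) * (starRingEnd ℂ) (t k l) * ((b k ^ (1 - s) : ℝ) : ℂ)
      = (t k l * (starRingEnd ℂ) (t k l)) * ((b l ^ s : ℝ) : ℂ) * ((b k ^ (1 - s) : ℝ) : ℂ) by ring]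
    rw [Complex.mul_conj, ← Complex.ofReal_mul, ← Complex.ofReal_mul, Complex.ofReal_re]
    ring
  have hint : ∫ s in (0 : ℝ)..1, (Matrix.trace (T * matRpow B s * T * matRpow B (1 - s))).re
      = ∑ k, ∑ l, Complex.normSq (t k l) * LM (b k) (b l) := by
    simp only [htr]
    have hii : ∀ k l, IntervalIntegrable
        (fun s => Complex.normSq (t k l) * (b k ^ (1 - s) * b l ^ s)) volume 0 1 := fun k l => by
      have := (LM_integrable (hb l) (hb k)).const_mul (Complex.normSq (t k l))
      refine Eq.mp ?_ this
      congr 1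
      funext s
      rw [mul_comm (b l ^ s)]
    rw [intervalIntegral.integral_finsetSum (fun k _ => by
      simpa only [Finset.sum_fn] using IntervalIntegrable.sum Finset.univ (fun l _ => hii k l))]
    refine Finset.sum_congr rfl fun k _ => ?_
    rw [intervalIntegral.integral_finsetSum (fun l _ => hii k l)]
    refine Finset.sum_congr rfl fun l _ => ?_
    rw [intervalIntegral.integral_const_mul]
    congr 1
    unfold LM
    have := intervalIntegral.integral_comp_sub_left (fun s => b k ^ s * b l ^ (1 - s)) (1:ℝ)
      (a := 0) (b := 1)
    simp only [sub_sub_cancel, sub_self, sub_zero] at this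
    exact this
  have hRB : (Matrix.trace (R * B)).re = 2 * ∑ k, ((W * Rt a c * Wᴴ) k k).re * b k := by
    have : Matrix.trace (R * B) =
        Matrix.trace (((2:ℂ) • (W * Rt a c * Wᴴ)) * Matrix.diagonal (fun i => (b i : ℂ))) := by
      rw [hBs, hRU, hWH, hWdef]
      rw [← Matrix.mul_assoc, Matrix.trace_mul_comm]
      congr 1
      simp only [Matrix.mul_assoc, Matrix.mul_smul, Matrix.smul_mul]
    rw [this, Matrix.trace, Complex.re_sum, Finset.mul_sum]
    refine Finset.sum_congr rfl fun k _ => ?_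
    simp only [Matrix.diag_apply, Matrix.mul_diagonal, Matrix.smul_apply, smul_eq_mul]
    rw [Complex.re_mul_ofReal]
    simp
    ring
  rw [hint, hRB]
  linarith
end
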